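/- arXiv:1104.5000 — 9 statements merged into one kernel-verified Lean document; each statement's English description precedes it below -/
import Mathlib

section
/- Let E be a finite-dimensional complex inner product space, T : E → E a self-adjoint linear map, and δ > 0. Suppose ψ_1, …, ψ_L is an orthonormal family in E and μ_1, …, μ_L are real numbers such that: (i) ‖Tψ_l − μ_l ψ_l‖² ≤ δ for every l; (ii) ⟨Tψ_l, ψ_{l'}⟩ = 0 for all l ≠ l'; (iii) Σ_{l ≠ l'} |⟨Tψ_l, Tψ_{l'}⟩| ≤ δ. Then there exist an orthonormal family e_1, …, e_L in E and real numbers λ_1, …, λ_L with T e_l = λ_l e_l and |λ_l − μ_l| ≤ √(2δ) for every l; that is, T has L eigenvalues, counted with multiplicity, each within √(2δ) of the corresponding μ_l. -/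
open scoped InnerProductSpace

section aux
variable {E : Type*} [NormedAddCommGroup E] [InnerProductSpace ℂ E]

lemma quad_form {ι : Type*} [Fintype ι] (b : OrthonormalBasis ι ℂ E) (T : E →ₗ[ℂ] E)
    (hT : T.IsSymmetric) (lam : ι → ℝ) (h : ∀ i, T (b i) = (lam i : ℂ) • b i) (v : E) :
    (⟪T v, v⟫_ℂ).re = ∑ i, lam i * ‖⟪b i, v⟫_ℂ‖ ^ 2 := by
  rw [← b.sum_inner_mul_inner, Complex.re_sum]
  refine Finset.sum_congr rfl fun i _ => ?_
  rw [hT v (b i), h i, inner_smul_right, mul_assoc, ← inner_conj_symm v (b i),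
    Complex.conj_mul', ← Complex.ofReal_pow, ← Complex.ofReal_mul, Complex.ofReal_re]

lemma weyl_one {n : ℕ} (b f : OrthonormalBasis (Fin n) ℂ E) (lam nu : Fin n → ℝ)
    (hl : Monotone lam) (hn : Monotone nu) (C : ℝ)
    (h : ∀ v : E, ∑ i, lam i * ‖⟪b i, v⟫_ℂ‖ ^ 2 ≤
      ∑ i, nu i * ‖⟪f i, v⟫_ℂ‖ ^ 2 + C * ‖v‖ ^ 2) (k : Fin n) :
    lam k ≤ nu k + C := by
  have : FiniteDimensional ℂ E := b.toBasis.finiteDimensional_of_finite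
  have hfr : Module.finrank ℂ E = n := by
    simpa using Module.finrank_eq_card_basis b.toBasis
  let φ : E →ₗ[ℂ] ({i : Fin n // i ≠ k} → ℂ) :=
    LinearMap.pi fun i => if i.1 < k then (innerSL ℂ (b i.1)).toLinearMap
      else (innerSL ℂ (f i.1)).toLinearMap
  have hlt : Module.finrank ℂ ({i : Fin n // i ≠ k} → ℂ) < Module.finrank ℂ E := by
    rw [hfr, Module.finrank_fintype_fun_eq_card]
    calc _ < Fintype.card (Fin n) := Fintype.card_subtype_lt (x := k) (by simp)
      _ = n := by simp
  obtain ⟨v, hv, hv0⟩ := (Submodule.ne_bot_iff _).1 (LinearMap.ker_ne_bot_of_finrank_lt hlt (f := φ))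
  have hv' : ∀ i : {i : Fin n // i ≠ k}, φ v i = 0 := fun i => by
    rw [LinearMap.mem_ker.1 hv]; rfl
  have hb : ∀ i, i < k → ⟪b i, v⟫_ℂ = 0 := fun i hi => by
    have := hv' ⟨i, hi.ne⟩
    simpa [φ, hi] using this
  have hf : ∀ i, k < i → ⟪f i, v⟫_ℂ = 0 := fun i hi => by
    have := hv' ⟨i, hi.ne'⟩
    simpa [φ, hi.not_gt] using this
  have e1 : lam k * ‖v‖ ^ 2 ≤ ∑ i, lam i * ‖⟪b i, v⟫_ℂ‖ ^ 2 := by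
    rw [← b.sum_sq_norm_inner_right v, Finset.mul_sum]
    refine Finset.sum_le_sum fun i _ => ?_
    rcases lt_or_ge i k with hi | hi
    · simp [hb i hi]
    · exact mul_le_mul_of_nonneg_right (hl hi) (by positivity)
  have e2 : ∑ i, nu i * ‖⟪f i, v⟫_ℂ‖ ^ 2 ≤ nu k * ‖v‖ ^ 2 := by
    rw [← f.sum_sq_norm_inner_right v, Finset.mul_sum]
    refine Finset.sum_le_sum fun i _ => ?_
    rcases lt_or_ge k i with hi | hi
    · simp [hf i hi]
    · exact mul_le_mul_of_nonneg_right (hn hi) (by positivity)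
  have hpos : 0 < ‖v‖ ^ 2 := by positivity
  have := h v
  by_contra! hc
  nlinarith

lemma weyl_perm {n : ℕ} {ι : Type*} [Fintype ι] (b : OrthonormalBasis (Fin n) ℂ E)
    (f : OrthonormalBasis ι ℂ E) (lam : Fin n → ℝ) (nu : ι → ℝ) (C : ℝ)
    (h : ∀ v : E, |∑ i, lam i * ‖⟪b i, v⟫_ℂ‖ ^ 2 - ∑ i, nu i * ‖⟪f i, v⟫_ℂ‖ ^ 2| ≤ C * ‖v‖ ^ 2) :
    ∃ σ : ι ≃ Fin n, ∀ j, |lam (σ j) - nu j| ≤ C := by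
  have hcard : Fintype.card ι = n := by
    have h1 := Module.finrank_eq_card_basis b.toBasis
    have h2 := Module.finrank_eq_card_basis f.toBasis
    simp at h1
    omega
  let τ : ι ≃ Fin n := Fintype.equivFinOfCardEq hcard
  let p := Tuple.sort lam
  let q := Tuple.sort (nu ∘ τ.symm)
  let b' := b.reindex p.symm
  let f' := (f.reindex τ).reindex q.symm
  have hb (v : E) : ∑ i, (lam ∘ p) i * ‖⟪b' i, v⟫_ℂ‖ ^ 2 = ∑ i, lam i * ‖⟪b i, v⟫_ℂ‖ ^ 2 := by
    simp only [b', OrthonormalBasis.reindex_apply, Function.comp, Equiv.symm_symm]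
    exact Equiv.sum_comp p fun i => lam i * ‖⟪b i, v⟫_ℂ‖ ^ 2
  have hf (v : E) : ∑ i, ((nu ∘ τ.symm) ∘ q) i * ‖⟪f' i, v⟫_ℂ‖ ^ 2
      = ∑ i, nu i * ‖⟪f i, v⟫_ℂ‖ ^ 2 := by
    simp only [f', OrthonormalBasis.reindex_apply, Function.comp, Equiv.symm_symm]
    exact Equiv.sum_comp (q.trans τ.symm) fun i => nu i * ‖⟪f i, v⟫_ℂ‖ ^ 2
  have m1 : Monotone (lam ∘ p) := Tuple.monotone_sort lam
  have m2 : Monotone ((nu ∘ τ.symm) ∘ q) := Tuple.monotone_sort _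
  refine ⟨(τ.trans q.symm).trans p, fun j => ?_⟩
  have k1 := weyl_one b' f' _ _ m1 m2 C (fun v => by
    rw [hb, hf]; linarith [(abs_le.1 (h v)).2]) (q.symm (τ j))
  have k2 := weyl_one f' b' _ _ m2 m1 C (fun v => by
    rw [hb, hf]; linarith [(abs_le.1 (h v)).1]) (q.symm (τ j))
  simp only [Function.comp, Equiv.apply_symm_apply, Equiv.symm_apply_apply] at k1 k2
  rw [abs_le]
  simp only [Equiv.trans_apply]
  constructor <;> linarith

lemma gram_bound {L : ℕ} (s : Fin L → E) (x : Fin L → ℂ) (δ : ℝ)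
    (h : ∑ p ∈ Finset.univ.offDiag, ‖⟪s p.1, s p.2⟫_ℂ‖ ≤ δ) :
    ‖∑ l, x l • s l‖ ^ 2 ≤ ∑ l, ‖x l‖ ^ 2 * ‖s l‖ ^ 2 + δ / 2 * ∑ l, ‖x l‖ ^ 2 := by
  have e : ‖∑ l, x l • s l‖ ^ 2 = ∑ p : Fin L × Fin L, (⟪x p.1 • s p.1, x p.2 • s p.2⟫_ℂ).re := by
    rw [← inner_self_eq_norm_sq (𝕜 := ℂ), sum_inner, Fintype.sum_prod_type]
    simp only [inner_sum, map_sum]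
    rfl
  rw [e, ← Finset.univ_product_univ, ← Finset.diag_union_offDiag,
    Finset.sum_union (Finset.disjoint_diag_offDiag _), Finset.sum_diag]
  apply add_le_add
  · refine Finset.sum_le_sum fun l _ => le_of_eq ?_
    have := inner_self_eq_norm_sq (𝕜 := ℂ) (x l • s l)
    rw [norm_smul, mul_pow] at this
    exact this
  · have hX : 0 ≤ ∑ l, ‖x l‖ ^ 2 := by positivity
    calc _ ≤ ∑ p ∈ Finset.univ.offDiag, ‖⟪s p.1, s p.2⟫_ℂ‖ * ((∑ l, ‖x l‖ ^ 2) / 2) := by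
          refine Finset.sum_le_sum fun p hp => ?_
          refine (Complex.re_le_norm _).trans ?_
          rw [inner_smul_left, inner_smul_right, norm_mul, norm_mul, RCLike.norm_conj]
          have hne : p.1 ≠ p.2 := (Finset.mem_offDiag.1 hp).2.2
          have h2 : ‖x p.1‖ ^ 2 + ‖x p.2‖ ^ 2 ≤ ∑ l, ‖x l‖ ^ 2 := by
            rw [← Finset.sum_pair (f := fun l => ‖x l‖ ^ 2) hne]
            exact Finset.sum_le_sum_of_subset_of_nonneg (Finset.subset_univ _)
              (fun _ _ _ => by positivity)
          have h3 : ‖x p.1‖ * ‖x p.2‖ ≤ (∑ l, ‖x l‖ ^ 2) / 2 := by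
            nlinarith [sq_nonneg (‖x p.1‖ - ‖x p.2‖)]
          nlinarith [mul_le_mul_of_nonneg_left h3 (norm_nonneg ⟪s p.1, s p.2⟫_ℂ)]
      _ ≤ _ := by
          rw [← Finset.sum_mul]
          nlinarith

/-- orthonormal basis completing `ψ` by eigenvectors of the compression to the complement -/
lemma exists_basis [FiniteDimensional ℂ E] (T : E →ₗ[ℂ] E) (hT : T.IsSymmetric) (L : ℕ)
    (ψ : Fin L → E) (hψ : Orthonormal ℂ ψ) :
    ∃ (m : ℕ) (f : OrthonormalBasis (Fin L ⊕ Fin m) ℂ E) (nu : Fin m → ℝ),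
      (∀ l, f (Sum.inl l) = ψ l) ∧
      ∀ w : E, (∀ l, ⟪ψ l, w⟫_ℂ = 0) →
        (⟪T w, w⟫_ℂ).re = ∑ j, nu j * ‖⟪f (Sum.inr j), w⟫_ℂ‖ ^ 2 := by
  let K := (Submodule.span ℂ (Set.range ψ))ᗮ
  let C : K →ₗ[ℂ] K := K.orthogonalProjectionOnto.toLinearMap ∘ₗ T ∘ₗ K.subtype
  have hCi (a c : K) : ⟪C a, c⟫_ℂ = ⟪T a, (c : E)⟫_ℂ := by
    simp [C]
  have hC : C.IsSymmetric := fun a c => by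
    rw [hCi, ← inner_conj_symm a (C c), hCi, inner_conj_symm, hT]
  let g := hC.eigenvectorBasis rfl
  have hgK (j) : ∀ l, ⟪ψ l, (g j : E)⟫_ℂ = 0 := fun l =>
    (Submodule.mem_orthogonal _ _).1 (g j).2 _ (Submodule.subset_span ⟨l, rfl⟩)
  let F : Fin L ⊕ Fin (Module.finrank ℂ K) → E := Sum.elim ψ fun j => (g j : E)
  have hF : Orthonormal ℂ F := by
    rw [orthonormal_iff_ite]
    have hg := orthonormal_iff_ite.1 g.orthonormal
    have hp := orthonormal_iff_ite.1 hψ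
    rintro (i | i) (j | j)
    · simpa [F] using hp i j
    · simpa [F] using hgK j i
    · simpa [F] using inner_eq_zero_symm.1 (hgK i j)
    · simpa [F] using hg i j
  have hcard : Fintype.card (Fin L ⊕ Fin (Module.finrank ℂ K)) = Module.finrank ℂ E := by
    have h1 := Submodule.finrank_add_finrank_orthogonal (Submodule.span ℂ (Set.range ψ))
    have h2 := finrank_span_eq_card hψ.linearIndependent
    simp only [Fintype.card_sum, Fintype.card_fin] at h2 ⊢
    rw [h2] at h1
    exact h1
  let f := OrthonormalBasis.mk hF
    (hF.linearIndependent.span_eq_top_of_card_eq_finrank' hcard).ge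
  refine ⟨_, f, hC.eigenvalues rfl, fun l => by simp [f, F], fun w hw => ?_⟩
  have hwK : w ∈ K := by
    rw [Submodule.mem_orthogonal]
    intro u hu
    induction hu using Submodule.span_induction with
    | mem x hx => obtain ⟨l, rfl⟩ := hx; exact hw l
    | zero => simp
    | add x y _ _ hx hy => simp [inner_add_left, hx, hy]
    | smul a x _ hx => simp [inner_smul_left, hx]
  have := quad_form g C hC (hC.eigenvalues rfl) (fun i => hC.apply_eigenvectorBasis rfl i) ⟨w, hwK⟩
  rw [hCi] at this
  simpa [f, F] using this

end aux

/-- Lemma 5.4 (eigenvalue approximation from almost eigensections), finite dimensional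
linear algebra version. -/
theorem almost_eigensections_give_eigenvalues
    {E : Type*} [NormedAddCommGroup E] [InnerProductSpace ℂ E] [FiniteDimensional ℂ E]
    (T : E →ₗ[ℂ] E) (hT : T.IsSymmetric)
    (δ : ℝ) (hδ : 0 < δ) (L : ℕ) (ψ : Fin L → E) (hψ : Orthonormal ℂ ψ)
    (μ : Fin L → ℝ)
    (h1 : ∀ l, ‖T (ψ l) - (μ l : ℂ) • ψ l‖ ^ 2 ≤ δ)
    (h2 : ∀ l l', l ≠ l' → ⟪T (ψ l), ψ l'⟫_ℂ = 0)
    (h3 : ∑ p ∈ Finset.univ.offDiag, ‖⟪T (ψ p.1), T (ψ p.2)⟫_ℂ‖ ≤ δ) :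
    ∃ (e : Fin L → E) (lam : Fin L → ℝ),
      Orthonormal ℂ e ∧ (∀ l, T (e l) = (lam l : ℂ) • e l) ∧
      ∀ l, |lam l - μ l| ≤ Real.sqrt (2 * δ) := by
  obtain ⟨m, f, nu, hfψ, hfw⟩ := exists_basis T hT L ψ hψ
  let b := hT.eigenvectorBasis (n := Module.finrank ℂ E) rfl
  have hbe : ∀ i, T (b i) = ((hT.eigenvalues rfl i : ℝ) : ℂ) • b i :=
    fun i => hT.apply_eigenvectorBasis rfl i
  suffices H : ∀ v : E, |∑ i, hT.eigenvalues rfl i * ‖⟪b i, v⟫_ℂ‖ ^ 2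
      - ∑ i, (Sum.elim μ nu) i * ‖⟪f i, v⟫_ℂ‖ ^ 2| ≤ Real.sqrt (2 * δ) * ‖v‖ ^ 2 by
    obtain ⟨σ, hσ⟩ := weyl_perm b f _ _ _ H
    refine ⟨fun l => b (σ (Sum.inl l)), fun l => hT.eigenvalues rfl (σ (Sum.inl l)),
      b.orthonormal.comp _ (σ.injective.comp Sum.inl_injective), fun l => hbe _, fun l => ?_⟩
    simpa using hσ (Sum.inl l)
  intro v
  rw [← quad_form b T hT _ hbe v]
  have hip := orthonormal_iff_ite.1 hψ
  set Λ := Real.sqrt (2 * δ) with hΛ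
  have hΛ0 : 0 < Λ := Real.sqrt_pos.2 (by positivity)
  have hΛ2 : Λ ^ 2 = 2 * δ := Real.sq_sqrt (by positivity)
  -- diagonal entries
  let a : Fin L → ℝ := fun l => (⟪T (ψ l), ψ l⟫_ℂ).re
  have ha (l) : ⟪T (ψ l), ψ l⟫_ℂ = (a l : ℂ) := by
    refine (Complex.conj_eq_iff_re.1 ?_).symm
    rw [inner_conj_symm, hT]
  have ha' (l) : ⟪ψ l, T (ψ l)⟫_ℂ = (a l : ℂ) := by rw [← hT, ha]
  let s : Fin L → E := fun l => T (ψ l) - (a l : ℂ) • ψ l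
  have hsψ (l l') : ⟪ψ l', s l⟫_ℂ = 0 := by
    simp only [s, inner_sub_right, inner_smul_right, hip]
    by_cases h : l = l'
    · subst h; simp [ha']
    · rw [← hT, h2 l' l (Ne.symm h)]; simp [Ne.symm h]
  have hss : ∑ p ∈ Finset.univ.offDiag, ‖⟪s p.1, s p.2⟫_ℂ‖ ≤ δ := by
    refine le_trans (le_of_eq ?_) h3
    refine Finset.sum_congr rfl fun p hp => ?_
    have hne : p.1 ≠ p.2 := (Finset.mem_offDiag.1 hp).2.2
    have : ⟪s p.1, s p.2⟫_ℂ = ⟪T (ψ p.1), s p.2⟫_ℂ := by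
      conv_lhs => rw [show s p.1 = T (ψ p.1) - (a p.1 : ℂ) • ψ p.1 from rfl]
      rw [inner_sub_left, inner_smul_left, hsψ]; simp
    rw [this]
    simp only [s, inner_sub_right, inner_smul_right, h2 _ _ hne]
    simp
  have hsn (l) : ‖s l‖ ^ 2 ≤ δ - (a l - μ l) ^ 2 := by
    have e : T (ψ l) - (μ l : ℂ) • ψ l = s l + ((a l - μ l : ℝ) : ℂ) • ψ l := by
      simp only [s]; push_cast; module
    have h := h1 l
    have h0 : ⟪s l, ((a l - μ l : ℝ) : ℂ) • ψ l⟫_ℂ = 0 := by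
      rw [inner_smul_right, inner_eq_zero_symm.1 (hsψ l l), mul_zero]
    have hp := norm_add_sq_eq_norm_sq_add_norm_sq_of_inner_eq_zero _ _ h0
    rw [e, sq, hp, norm_smul, hψ.1 l, Complex.norm_real, Real.norm_eq_abs, mul_one,
      abs_mul_abs_self] at h
    nlinarith
  -- decomposition
  let x : Fin L → ℂ := fun l => ⟪ψ l, v⟫_ℂ
  let u : E := ∑ l, x l • ψ l
  let w : E := v - u
  have hvw : v = u + w := by simp [w]
  have hψu (l) : ⟪ψ l, u⟫_ℂ = x l := hψ.inner_right_fintype x l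
  have hw (l) : ⟪ψ l, w⟫_ℂ = 0 := by
    simp only [w, inner_sub_right, hψu]; simp [x]
  have hwψ (l) : ⟪w, ψ l⟫_ℂ = 0 := inner_eq_zero_symm.1 (hw l)
  let Su : E := ∑ l, x l • s l
  have hTu : T u = Su + ∑ l, (x l * a l) • ψ l := by
    simp only [u, Su, map_sum, map_smul, ← Finset.sum_add_distrib, s]
    refine Finset.sum_congr rfl fun l _ => ?_
    module
  have hTuw : ⟪T u, w⟫_ℂ = ⟪Su, w⟫_ℂ := by
    have h0 : ⟪∑ l, (x l * a l) • ψ l, w⟫_ℂ = 0 := by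
      rw [sum_inner]
      exact Finset.sum_eq_zero fun l _ => by rw [inner_smul_left, hw, mul_zero]
    rw [hTu, inner_add_left, h0, add_zero]
  have hSuu : ⟪Su, u⟫_ℂ = 0 := by
    simp only [Su, u, sum_inner, inner_sum, inner_smul_left, inner_smul_right]
    simp [fun l l' => inner_eq_zero_symm.1 (hsψ l l')]
  have hTuu : (⟪T u, u⟫_ℂ).re = ∑ l, a l * ‖x l‖ ^ 2 := by
    rw [hTu, inner_add_left, hSuu, zero_add, sum_inner, Complex.re_sum]
    refine Finset.sum_congr rfl fun l _ => ?_
    rw [inner_smul_left, hψu, map_mul, Complex.conj_ofReal, mul_right_comm, Complex.conj_mul',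
      ← Complex.ofReal_pow, ← Complex.ofReal_mul, Complex.ofReal_re, mul_comm]
  have hTwu : (⟪T w, u⟫_ℂ).re = (⟪Su, w⟫_ℂ).re := by
    rw [hT, ← inner_conj_symm, hTuw, Complex.conj_re]
  have hTv : (⟪T v, v⟫_ℂ).re = ∑ l, a l * ‖x l‖ ^ 2 + 2 * (⟪Su, w⟫_ℂ).re + (⟪T w, w⟫_ℂ).re := by
    conv_lhs => rw [hvw]
    rw [map_add, inner_add_left, inner_add_right, inner_add_right]
    simp only [Complex.add_re]
    rw [hTuu, hTwu, hTuw]; ring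
  have hfr (j) : ⟪f (Sum.inr j), v⟫_ℂ = ⟪f (Sum.inr j), w⟫_ℂ := by
    have : ⟪f (Sum.inr j), u⟫_ℂ = 0 := by
      simp only [u, inner_sum, inner_smul_right, ← hfψ]
      refine Finset.sum_eq_zero fun l _ => ?_
      rw [f.orthonormal.2 (by simp), mul_zero]
    conv_lhs => rw [hvw]
    rw [inner_add_right, this, zero_add]
  have hsum : ∑ i, (Sum.elim μ nu) i * ‖⟪f i, v⟫_ℂ‖ ^ 2
      = ∑ l, μ l * ‖x l‖ ^ 2 + (⟪T w, w⟫_ℂ).re := by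
    rw [Fintype.sum_sum_type, hfw w hw]
    simp [hfψ, hfr, x]
  have hvn : ‖v‖ ^ 2 = ∑ l, ‖x l‖ ^ 2 + ‖w‖ ^ 2 := by
    have huw : ⟪u, w⟫_ℂ = 0 := by simp [u, sum_inner, inner_smul_left, hw]
    have hun : ‖u‖ ^ 2 = ∑ l, ‖x l‖ ^ 2 := by
      rw [← inner_self_eq_norm_sq (𝕜 := ℂ)]
      conv_lhs => enter [2, 2]; rw [show u = ∑ l, x l • ψ l from rfl]
      rw [inner_sum, map_sum]
      refine Finset.sum_congr rfl fun l _ => ?_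
      rw [inner_smul_right, ← inner_conj_symm, hψu, Complex.mul_conj', ← Complex.ofReal_pow]
      exact Complex.ofReal_re _
    have := norm_add_sq_eq_norm_sq_add_norm_sq_of_inner_eq_zero _ _ huw
    rw [← hvw] at this
    rw [← hun]; nlinarith
  have hS := gram_bound s x δ hss
  rw [hTv, hsum, hvn]
  set X := ∑ l, ‖x l‖ ^ 2 with hX
  have hD : |∑ l, a l * ‖x l‖ ^ 2 - ∑ l, μ l * ‖x l‖ ^ 2| ≤ ∑ l, |a l - μ l| * ‖x l‖ ^ 2 := by
    rw [← Finset.sum_sub_distrib]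
    refine (Finset.abs_sum_le_sum_abs _ _).trans (Finset.sum_le_sum fun l _ => ?_)
    rw [← sub_mul, abs_mul, abs_of_nonneg (sq_nonneg ‖x l‖)]
  have hR : |(⟪Su, w⟫_ℂ).re| ≤ ‖Su‖ * ‖w‖ :=
    (Complex.abs_re_le_norm _).trans (norm_inner_le_norm _ _)
  have hmain : Λ * ∑ l, |a l - μ l| * ‖x l‖ ^ 2 + ∑ l, ‖x l‖ ^ 2 * ‖s l‖ ^ 2
      ≤ (3 / 2 * δ) * X := by
    rw [hX, Finset.mul_sum, Finset.mul_sum, ← Finset.sum_add_distrib]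
    refine Finset.sum_le_sum fun l _ => ?_
    have k : Λ * |a l - μ l| + ‖s l‖ ^ 2 ≤ 3 / 2 * δ := by
      nlinarith [sq_nonneg (|a l - μ l| - Λ / 2), hsn l, sq_abs (a l - μ l)]
    nlinarith [mul_le_mul_of_nonneg_right k (sq_nonneg ‖x l‖)]
  have hfin : ∑ l, |a l - μ l| * ‖x l‖ ^ 2 + 2 * (‖Su‖ * ‖w‖) ≤ Λ * (X + ‖w‖ ^ 2) := by
    refine le_of_mul_le_mul_left ?_ hΛ0
    have hS' : ‖Su‖ ^ 2 ≤ ∑ l, ‖x l‖ ^ 2 * ‖s l‖ ^ 2 + δ / 2 * X := hS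
    have e : Λ * (Λ * (X + ‖w‖ ^ 2)) = 2 * δ * X + Λ ^ 2 * ‖w‖ ^ 2 := by
      rw [← mul_assoc, ← sq, mul_add, hΛ2]
    rw [e]
    nlinarith [sq_nonneg (‖Su‖ - Λ * ‖w‖)]
  rw [abs_le] at hD hR ⊢
  constructor <;> linarith [hD.1, hD.2, hR.1, hR.2]
end

section
/- For every δ > 0 there exists a constant c ≥ 0 with the following property: for every positive integer L₀ with L₀ > 2δ and every finite family u_1, …, u_L of unit vectors in ℂ^{L₀} such that |⟨u_l, u_{l'}⟩| < δ/L₀ for all l ≠ l', one has L ≤ L₀ + c. -/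
open scoped InnerProductSpace

/-- Order-one Welch inequality. -/
theorem welch_aux (n L : ℕ) (u : Fin L → EuclideanSpace ℂ (Fin n)) (hu : ∀ l, ‖u l‖ = 1) :
    (L : ℝ) ^ 2 ≤ n * ∑ l, ∑ l', ‖⟪u l, u l'⟫_ℂ‖ ^ 2 := by
  set S : Fin n → Fin n → ℂ := fun i j => ∑ l, u l i * (starRingEnd ℂ) (u l j) with hS
  have hinner : ∀ l l', ⟪u l, u l'⟫_ℂ = ∑ i, u l' i * (starRingEnd ℂ) (u l i) := by
    intro l l'
    simp [PiLp.inner_apply]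
  have h1 : ∑ i, ∑ j, ‖S i j‖ ^ 2 = ∑ l, ∑ l', ‖⟪u l, u l'⟫_ℂ‖ ^ 2 := by
    have : ((∑ i, ∑ j, ‖S i j‖ ^ 2 : ℝ) : ℂ) = ((∑ l, ∑ l', ‖⟪u l, u l'⟫_ℂ‖ ^ 2 : ℝ) : ℂ) := by
      push_cast
      simp_rw [← Complex.mul_conj', hinner, hS, map_sum, Finset.sum_mul_sum]
      simp only [map_mul, Complex.conj_conj]
      calc _ = ∑ i, ∑ l, ∑ l', ∑ j, (u l i * (starRingEnd ℂ) (u l j) * ((starRingEnd ℂ) (u l' i) * u l' j)) := by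
            refine Finset.sum_congr rfl fun i _ => ?_
            rw [Finset.sum_comm]
            refine Finset.sum_congr rfl fun l _ => ?_
            rw [Finset.sum_comm]
        _ = ∑ l, ∑ l', ∑ i, ∑ j, (u l i * (starRingEnd ℂ) (u l j) * ((starRingEnd ℂ) (u l' i) * u l' j)) := by
            rw [Finset.sum_comm]
            refine Finset.sum_congr rfl fun l _ => ?_
            rw [Finset.sum_comm]
        _ = _ := by
            refine Finset.sum_congr rfl fun l _ => Finset.sum_congr rfl fun l' _ => ?_
            rw [Finset.sum_comm]
            refine Finset.sum_congr rfl fun i _ => Finset.sum_congr rfl fun j _ => ?_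
            ring
    exact_mod_cast this
  have h2 : ∑ i, S i i = (L : ℂ) := by
    simp only [hS]
    rw [Finset.sum_comm]
    simp_rw [← hinner, inner_self_eq_norm_sq_to_K, hu]
    simp
  have h3 : (L : ℝ) ≤ ∑ i, ‖S i i‖ := by
    have := norm_sum_le Finset.univ (fun i => S i i)
    rw [h2] at this
    simpa using this
  rw [← h1]
  calc (L : ℝ) ^ 2 ≤ (∑ i, ‖S i i‖) ^ 2 := by gcongr
    _ ≤ n * ∑ i, ‖S i i‖ ^ 2 := by
        have := sq_sum_le_card_mul_sum_sq (s := (Finset.univ : Finset (Fin n))) (f := fun i => ‖S i i‖)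
        simpa using this
    _ ≤ _ := by
        gcongr with i _
        exact Finset.single_le_sum (f := fun j => ‖S i j‖ ^ 2) (fun _ _ => by positivity) (Finset.mem_univ i)

/-- Packing bound in a fixed dimension. -/
theorem packing_aux (n : ℕ) : ∃ N : ℕ, ∀ (L : ℕ) (u : Fin L → EuclideanSpace ℂ (Fin n)),
    (∀ l, ‖u l‖ = 1) → (∀ l l', l ≠ l' → ‖⟪u l, u l'⟫_ℂ‖ < 1 / 2) → L ≤ N := by
  obtain ⟨t, -, htf, ht⟩ := (isCompact_sphere (0 : EuclideanSpace ℂ (Fin n)) 1).finite_cover_balls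
    (e := 1 / 2) (by norm_num)
  refine ⟨htf.toFinset.card, fun L u hu h => ?_⟩
  have hc : ∀ l, ∃ x ∈ t, dist (u l) x < 1 / 2 := by
    intro l
    have := ht (show u l ∈ Metric.sphere 0 1 by simp [hu])
    simpa using this
  choose f hf hd using hc
  by_contra! hlt
  obtain ⟨a, -, b, -, hab, he⟩ := Finset.exists_ne_map_eq_of_card_lt_of_maps_to
    (s := (Finset.univ : Finset (Fin L))) (t := htf.toFinset) (f := f) (by simpa using hlt)
    (fun l _ => by simpa using hf l)
  have h1 : dist (u a) (u b) < 1 := by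
    have := dist_triangle_right (u a) (u b) (f a)
    have h2 := hd a
    have h3 := hd b
    rw [← he] at h3
    linarith
  rw [dist_eq_norm] at h1
  have h4 := norm_sub_sq (𝕜 := ℂ) (u a) (u b)
  rw [hu, hu] at h4
  have h5 : RCLike.re ⟪u a, u b⟫_ℂ ≤ ‖⟪u a, u b⟫_ℂ‖ := RCLike.re_le_norm _
  have h6 := h a b hab
  nlinarith [norm_nonneg (u a - u b)]

/-- Lemma (Welch bound consequence): a family of unit vectors in `ℂ^{L₀}` with pairwise
inner products of magnitude less than `δ/L₀` has at most `L₀ + c` elements. -/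
theorem welch_bound_dimension_count (δ : ℝ) (hδ : 0 < δ) :
    ∃ c : ℝ, 0 ≤ c ∧
      ∀ (L₀ : ℕ), 2 * δ < (L₀ : ℝ) →
        ∀ (L : ℕ) (u : Fin L → EuclideanSpace ℂ (Fin L₀)),
          (∀ l, ‖u l‖ = 1) →
          (∀ l l', l ≠ l' → ‖⟪u l, u l'⟫_ℂ‖ < δ / (L₀ : ℝ)) →
          (L : ℝ) ≤ (L₀ : ℝ) + c := by
  choose N hN using packing_aux
  refine ⟨2 * δ ^ 2 + ((∑ n ∈ Finset.range ⌈2 * δ ^ 2⌉₊, N n : ℕ) : ℝ), by positivity, ?_⟩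
  intro n hn L u hu h
  have hn0 : (0 : ℝ) < n := by linarith
  by_cases hbig : 2 * δ ^ 2 ≤ n
  · have hS : (0 : ℝ) ≤ ((∑ n ∈ Finset.range ⌈2 * δ ^ 2⌉₊, N n : ℕ) : ℝ) := by positivity
    suffices (L : ℝ) ≤ n + 2 * δ ^ 2 by linarith
    have hw := welch_aux n L u hu
    have hrow : ∀ l, ∑ l', ‖⟪u l, u l'⟫_ℂ‖ ^ 2 ≤ 1 + L * (δ / n) ^ 2 := by
      intro l
      calc ∑ l', ‖⟪u l, u l'⟫_ℂ‖ ^ 2 ≤ ∑ l', ((if l = l' then 1 else 0) + (δ / n) ^ 2) := by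
            refine Finset.sum_le_sum fun l' _ => ?_
            split_ifs with hl
            · subst hl
              rw [inner_self_eq_norm_sq_to_K, hu]
              simp
              positivity
            · have := (h l l' hl).le
              rw [zero_add]
              gcongr
        _ = _ := by simp [Finset.sum_add_distrib]
    have hw2 : (L : ℝ) ^ 2 ≤ n * (L * (1 + L * (δ / n) ^ 2)) := by
      refine hw.trans ?_
      gcongr
      refine (Finset.sum_le_sum fun l _ => hrow l).trans ?_
      simp [mul_add]
    rcases Nat.eq_zero_or_pos L with h0 | hL
    · subst h0; simp; positivity
    have hLr : (0 : ℝ) < L := by exact_mod_cast hL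
    have e : (n : ℝ) * (L * (1 + L * (δ / n) ^ 2)) = L * ((n ^ 2 + L * δ ^ 2) / n) := by
      field_simp
    rw [e, pow_two] at hw2
    have h3 := le_of_mul_le_mul_left hw2 hLr
    rw [le_div_iff₀ hn0] at h3
    -- L (n - δ²) ≤ n²
    have hd2 : 0 < δ ^ 2 := by positivity
    by_contra! hc
    nlinarith [mul_lt_mul_of_pos_right hc (show 0 < (n : ℝ) - δ ^ 2 by linarith)]
  · push Not at hbig
    have hlt : n < ⌈2 * δ ^ 2⌉₊ := Nat.lt_ceil.mpr hbig
    have h1 : L ≤ N n := hN n L u hu fun l l' hl => (h l l' hl).trans (by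
      rw [div_lt_div_iff₀ hn0 (by norm_num)]; linarith)
    have h2 : N n ≤ ∑ n ∈ Finset.range ⌈2 * δ ^ 2⌉₊, N n :=
      Finset.single_le_sum (f := N) (fun _ _ => Nat.zero_le _) (Finset.mem_range.mpr hlt)
    have h3 : (L : ℝ) ≤ ((∑ n ∈ Finset.range ⌈2 * δ ^ 2⌉₊, N n : ℕ) : ℝ) := by
      exact_mod_cast h1.trans h2
    have : 0 < δ ^ 2 := by positivity
    linarith
end

section
/- Fix a constant ε ∈ (0, 1/100). There exists a constant c > 0 such that for every integer k ≥ 0, every real number γ > 0 with k ≤ 32ε²γ, and every real number t ≥ 9ε, one has (1/k!) · (γ/2)^{k+1} · t^{2k} · exp(−γt²/2) ≤ c · exp(−γt²/c). -/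
/-- Lemma 5.11: uniform Gaussian decay of the normalized kernel elements of the
two-dimensional harmonic oscillator, for `k ≤ 32ε²γ` and `t ≥ 9ε`. -/
theorem harmonic_oscillator_kernel_decay (ε : ℝ) (hε0 : 0 < ε) (hε1 : ε < 1 / 100) :
    ∃ c : ℝ, 0 < c ∧
      ∀ (k : ℕ) (γ t : ℝ), 0 < γ → (k : ℝ) ≤ 32 * ε ^ 2 * γ → 9 * ε ≤ t →
        (1 / (Nat.factorial k : ℝ)) * (γ / 2) ^ (k + 1) * t ^ (2 * k) *
            Real.exp (-(γ * t ^ 2) / 2)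
          ≤ c * Real.exp (-(γ * t ^ 2) / c) := by
  obtain ⟨L, hL⟩ : ∃ L, L = Real.log (81 / 64 : ℝ) := ⟨_, rfl⟩
  have hL0 : 0 ≤ L := hL ▸ Real.log_nonneg (by norm_num)
  have hL1 : L < 17 / 64 := by
    have := Real.log_lt_sub_one_of_pos (x := (81 / 64 : ℝ)) (by norm_num) (by norm_num)
    rw [hL]; linarith
  have hLe : Real.exp L = 81 / 64 := by rw [hL]; exact Real.exp_log (by norm_num)
  obtain ⟨δ, hδ⟩ : ∃ δ : ℝ, δ = 17 / 81 - 64 / 81 * L := ⟨_, rfl⟩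
  have hδ0 : 0 < δ := by rw [hδ]; linarith
  obtain ⟨C, hC⟩ : ∃ C : ℝ, C = 2 / (81 * ε ^ 2 * δ) := ⟨_, rfl⟩
  have hC0 : 0 < C := by rw [hC]; positivity
  have h4 : 0 < 4 / δ := by positivity
  refine ⟨C + 4 / δ, by positivity, ?_⟩
  intro k γ t hγ hk ht
  obtain ⟨x, hx⟩ : ∃ x : ℝ, x = γ * t ^ 2 / 2 := ⟨_, rfl⟩
  have ht2 : 81 * ε ^ 2 ≤ t ^ 2 := by nlinarith
  have hx0 : 0 ≤ x := by rw [hx]; positivity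
  have hγx : γ / 2 * (81 * ε ^ 2) ≤ x := by rw [hx]; nlinarith
  have hkx : (k : ℝ) ≤ 64 / 81 * x := by linarith
  have h1 : x ^ k / (Nat.factorial k : ℝ) ≤ Real.exp (x - δ * x) := by
    have ha : (64 / 81 * x) ^ k / (Nat.factorial k : ℝ) ≤ Real.exp (64 / 81 * x) :=
      Real.pow_div_factorial_le_exp _ (by positivity) k
    have hb : (81 / 64 : ℝ) ^ k ≤ Real.exp (64 / 81 * x * L) := by
      rw [← hLe, ← Real.exp_nat_mul]
      exact Real.exp_le_exp.2 (by gcongr)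
    calc x ^ k / (Nat.factorial k : ℝ)
        = (81 / 64 : ℝ) ^ k * ((64 / 81 * x) ^ k / (Nat.factorial k : ℝ)) := by
          rw [← mul_div_assoc, ← mul_pow]; congr 2; ring
      _ ≤ Real.exp (64 / 81 * x * L) * Real.exp (64 / 81 * x) := by gcongr
      _ = Real.exp (x - δ * x) := by rw [← Real.exp_add, hδ]; congr 1; ring
  have h2 : γ / 2 ≤ C * Real.exp (δ * x / 2) := by
    have h3 : δ * x / 2 ≤ Real.exp (δ * x / 2) := by
      linarith [Real.add_one_le_exp (δ * x / 2)]
    calc γ / 2 ≤ x / (81 * ε ^ 2) := by rw [le_div_iff₀ (by positivity)]; exact hγx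
      _ = C * (δ * x / 2) := by rw [hC]; field_simp
      _ ≤ _ := by gcongr
  calc (1 / (Nat.factorial k : ℝ)) * (γ / 2) ^ (k + 1) * t ^ (2 * k) *
            Real.exp (-(γ * t ^ 2) / 2)
      = (γ / 2) * (x ^ k / (Nat.factorial k : ℝ)) * Real.exp (-x) := by
        rw [show -(γ * t ^ 2) / 2 = -x by rw [hx]; ring,
          show x ^ k = (γ / 2) ^ k * t ^ (2 * k) by rw [hx, pow_mul, ← mul_pow]; congr 1; ring]
        ring
    _ ≤ (C * Real.exp (δ * x / 2)) * Real.exp (x - δ * x) * Real.exp (-x) := by gcongr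
    _ = C * Real.exp (-(δ * x / 2)) := by
        rw [mul_assoc, mul_assoc, ← Real.exp_add, ← Real.exp_add]; congr 2; ring
    _ ≤ (C + 4 / δ) * Real.exp (-(γ * t ^ 2) / (C + 4 / δ)) := by
        have h5 : γ * t ^ 2 / (C + 4 / δ) ≤ γ * t ^ 2 / (4 / δ) := by
          gcongr; linarith
        have h6 : γ * t ^ 2 / (4 / δ) = δ * x / 2 := by rw [hx]; field_simp; ring
        have h7 : -(δ * x / 2) ≤ -(γ * t ^ 2) / (C + 4 / δ) := by
          rw [neg_div]; linarith
        gcongr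
        linarith
end

section
/- There exists a constant c > 0 such that for every real number r ≥ c, the number of pairs of integers (k, m) with k ≥ 1 and γ_{k,m} ≤ r differs from (r²/4)·∫₀² Δ(ρ) dρ by at most c·r; that is, |#{(k,m) ∈ ℤ² : k ≥ 1, γ_{k,m} ≤ r} − (r²/4)∫₀² Δ(ρ) dρ| ≤ c·r. -/
open MeasureTheory

def lcBox (p : ℤ × ℤ) : Set (ℝ × ℝ) :=
  Set.Ico (p.1 : ℝ) (p.1 + 1) ×ˢ Set.Ico (p.2 : ℝ) (p.2 + 1)

lemma mem_lcBox_iff (p : ℤ × ℤ) (x : ℝ × ℝ) : x ∈ lcBox p ↔ (⌊x.1⌋, ⌊x.2⌋) = p := by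
  rw [lcBox, Set.mem_prod, Set.mem_Ico, Set.mem_Ico, Prod.ext_iff, Int.floor_eq_iff, Int.floor_eq_iff]

lemma volume_lcBox (p : ℤ × ℤ) : volume (lcBox p) = 1 := by
  rw [lcBox, Measure.volume_eq_prod, Measure.prod_prod]
  simp

lemma measurableSet_lcBox (p : ℤ × ℤ) : MeasurableSet (lcBox p) :=
  measurableSet_Ico.prod measurableSet_Ico

lemma lc_count (S : Set (ℤ × ℤ)) (U : Set (ℝ × ℝ)) (B T : Finset (ℤ × ℤ))
    (hU : MeasurableSet U) (hST : S ⊆ T) (hUT : ∀ x ∈ U, (⌊x.1⌋, ⌊x.2⌋) ∈ T)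
    (h : ∀ p, p ∉ B → (p ∈ S ∧ lcBox p ⊆ U) ∨ (p ∉ S ∧ Disjoint (lcBox p) U)) :
    |(S.ncard : ℝ) - volume.real U| ≤ B.card := by
  classical
  have hUeq : U = ⋃ p ∈ T, (lcBox p ∩ U) := by
    ext x
    simp only [Set.mem_iUnion, Set.mem_inter_iff, exists_prop, mem_lcBox_iff]
    constructor
    · intro hx
      exact ⟨_, hUT x hx, rfl, hx⟩
    · rintro ⟨p, _, _, hx⟩
      exact hx
  have hvol : volume.real U = ∑ p ∈ T, volume.real (lcBox p ∩ U) := by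
    conv_lhs => rw [hUeq]
    apply measureReal_biUnion_finset
    · intro p _ q _ hpq
      refine Set.disjoint_left.2 fun x hx hy => hpq ?_
      rw [← (mem_lcBox_iff p x).1 hx.1, ← (mem_lcBox_iff q x).1 hy.1]
    · intro p _
      exact (measurableSet_lcBox p).inter hU
    · intro p _
      refine ne_top_of_le_ne_top ?_ (measure_mono Set.inter_subset_left)
      rw [volume_lcBox]; simp
  have hS : (S.ncard : ℝ) = ∑ p ∈ T, (if p ∈ S then (1 : ℝ) else 0) := by
    have : S = ((T.filter (· ∈ S) : Finset _) : Set (ℤ × ℤ)) := by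
      ext p
      simp only [Finset.coe_filter, Set.mem_ofPred_eq]
      exact ⟨fun hp => ⟨hST hp, hp⟩, fun hp => hp.2⟩
    rw [Finset.sum_boole]
    conv_lhs => rw [this]
    rw [Set.ncard_coe_finset]
  rw [hS, hvol, ← Finset.sum_sub_distrib]
  refine (Finset.abs_sum_le_sum_abs _ _).trans ?_
  have hterm : ∀ p ∈ T, |(if p ∈ S then (1 : ℝ) else 0) - volume.real (lcBox p ∩ U)|
      ≤ if p ∈ B then 1 else 0 := by
    intro p _
    have h0 : 0 ≤ volume.real (lcBox p ∩ U) := measureReal_nonneg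
    have hb1 : volume.real (lcBox p) = 1 := by
      rw [measureReal_def, volume_lcBox]; simp
    have h1 : volume.real (lcBox p ∩ U) ≤ 1 := by
      rw [← hb1]
      exact measureReal_mono Set.inter_subset_left (by rw [volume_lcBox]; simp)
    by_cases hp : p ∈ B
    · rw [if_pos hp, abs_le]
      split_ifs <;> constructor <;> linarith
    · rw [if_neg hp]
      rcases h p hp with ⟨a, b⟩ | ⟨a, b⟩
      · rw [if_pos a, Set.inter_eq_left.2 b, hb1]; simp
      · rw [if_neg a, Set.disjoint_iff_inter_eq_empty.1 b]; simp
  refine (Finset.sum_le_sum hterm).trans ?_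
  rw [Finset.sum_boole]
  norm_cast
  apply Finset.card_le_card
  intro p hp
  exact (Finset.mem_filter.1 hp).2

lemma lc_cover (u v : ℝ → ℝ) (L : ℕ)
    (hu : ∀ s ∈ Set.Icc (0 : ℝ) 2, ∀ t ∈ Set.Icc (0 : ℝ) 2, |u s - u t| ≤ L * |s - t|)
    (hv : ∀ s ∈ Set.Icc (0 : ℝ) 2, ∀ t ∈ Set.Icc (0 : ℝ) 2, |v s - v t| ≤ L * |s - t|)
    (R : ℝ) (hR : 1 ≤ R) :
    ∃ B : Finset (ℤ × ℤ), (B.card : ℝ) ≤ 5 * (2 * L + 5) ^ 2 * R ∧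
      ∀ t ∈ Set.Icc (0 : ℝ) 2, ∀ p : ℤ × ℤ, (p.1 : ℝ) ≤ R * u t → R * u t ≤ p.1 + 1 →
        (p.2 : ℝ) ≤ R * v t → R * v t ≤ p.2 + 1 → p ∈ B := by
  classical
  set N : ℕ := ⌈R⌉₊ with hN
  have hRN : R ≤ N := Nat.le_ceil R
  have hN0 : (0 : ℝ) < N := by linarith
  have hNR : (N : ℝ) < R + 1 := Nat.ceil_lt_add_one (by linarith)
  let a : ℕ → ℤ := fun j => ⌊R * u (j / N)⌋
  let b : ℕ → ℤ := fun j => ⌊R * v (j / N)⌋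
  refine ⟨(Finset.range (2 * N + 1)).biUnion fun j =>
    Finset.Icc (a j - (L + 2 : ℕ)) (a j + (L + 2 : ℕ)) ×ˢ
    Finset.Icc (b j - (L + 2 : ℕ)) (b j + (L + 2 : ℕ)), ?_, ?_⟩
  · have h1 : ((Finset.range (2 * N + 1)).biUnion fun j =>
      Finset.Icc (a j - (L + 2 : ℕ)) (a j + (L + 2 : ℕ)) ×ˢ
      Finset.Icc (b j - (L + 2 : ℕ)) (b j + (L + 2 : ℕ))).card ≤ (2 * N + 1) * (2 * L + 5) ^ 2 := by
      refine Finset.card_biUnion_le.trans ?_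
      refine (Finset.sum_le_card_nsmul _ _ ((2 * L + 5) ^ 2) ?_).trans ?_
      · intro j _
        rw [Finset.card_product, Int.card_Icc, Int.card_Icc, sq]
        apply Nat.mul_le_mul <;> omega
      · simp
    have h2 : ((2 * N + 1) * (2 * L + 5) ^ 2 : ℝ) ≤ (5 * R) * (2 * L + 5) ^ 2 := by
      gcongr
      linarith
    calc _ ≤ (((2 * N + 1) * (2 * L + 5) ^ 2 : ℕ) : ℝ) := by exact_mod_cast h1
      _ ≤ _ := by push_cast; linarith
  · intro t ht p h1 h2 h3 h4
    have htN : 0 ≤ t * N := mul_nonneg ht.1 hN0.le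
    set j := ⌊t * N⌋₊ with hj
    have hj1 : (j : ℝ) ≤ t * N := Nat.floor_le htN
    have hj2 : t * N < j + 1 := Nat.lt_floor_add_one _
    have hjt : (j : ℝ) / N ≤ t := by rw [div_le_iff₀ hN0]; exact hj1
    have hjI : (j : ℝ) / N ∈ Set.Icc (0 : ℝ) 2 := ⟨by positivity, hjt.trans ht.2⟩
    have hd : |t - j / N| ≤ 1 / N := by
      rw [abs_of_nonneg (by linarith), le_div_iff₀ hN0, sub_mul, div_mul_cancel₀ _ hN0.ne']
      linarith
    have key : ∀ w : ℝ → ℝ, (∀ s ∈ Set.Icc (0 : ℝ) 2, ∀ t ∈ Set.Icc (0 : ℝ) 2,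
        |w s - w t| ≤ L * |s - t|) → ∀ q : ℤ, (q : ℝ) ≤ R * w t → R * w t ≤ q + 1 →
        q ∈ Finset.Icc (⌊R * w (j / N)⌋ - (L + 2 : ℕ)) (⌊R * w (j / N)⌋ + (L + 2 : ℕ)) := by
      intro w hw q hq1 hq2
      have e1 : |R * w t - R * w (j / N)| ≤ L := by
        rw [← mul_sub, abs_mul, abs_of_pos (by linarith : 0 < R)]
        calc R * |w t - w (j / N)| ≤ N * (L * (1 / N)) := by
              gcongr
              exact (hw t ht _ hjI).trans (by gcongr)
          _ = L := by field_simp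
      rw [abs_le] at e1
      have f1 := Int.floor_le (R * w (j / N))
      have f2 := Int.lt_floor_add_one (R * w (j / N))
      rw [Finset.mem_Icc]
      constructor
      · have : ((⌊R * w (j / N)⌋ - (L + 2 : ℕ) : ℤ) : ℝ) ≤ q := by
          push_cast; linarith [e1.1]
        exact_mod_cast this
      · have : (q : ℝ) ≤ ((⌊R * w (j / N)⌋ + (L + 2 : ℕ) : ℤ) : ℝ) := by
          push_cast; linarith [e1.2]
        exact_mod_cast this
    rw [Finset.mem_biUnion]
    refine ⟨j, ?_, Finset.mem_product.2 ⟨key u hu _ h1 h2, key v hv _ h3 h4⟩⟩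
    rw [Finset.mem_range, Nat.lt_succ_iff]
    have : (j : ℝ) ≤ ((2 * N : ℕ) : ℝ) := by
      push_cast
      exact hj1.trans (by gcongr; exact ht.2)
    exact_mod_cast this

lemma lc_bdd (f : ℝ → ℝ) (hf : Continuous f) : ∃ L : ℕ, ∀ t ∈ Set.Icc (0 : ℝ) 2, |f t| ≤ L := by
  obtain ⟨C, hC⟩ := (isCompact_Icc (a := (0 : ℝ)) (b := 2)).exists_bound_of_continuousOn
    hf.continuousOn
  obtain ⟨L, hL⟩ := exists_nat_ge C
  exact ⟨L, fun t ht => (hC t ht).trans hL⟩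

lemma lc_lip (f : ℝ → ℝ) (hf : ContDiff ℝ 1 f) (L : ℕ)
    (hL : ∀ t ∈ Set.Icc (0 : ℝ) 2, |deriv f t| ≤ L) :
    ∀ s ∈ Set.Icc (0 : ℝ) 2, ∀ t ∈ Set.Icc (0 : ℝ) 2, |f s - f t| ≤ L * |s - t| := by
  intro s hs t ht
  exact Convex.norm_image_sub_le_of_norm_deriv_le (s := Set.Icc (0 : ℝ) 2)
    (fun x _ => (hf.differentiable (by norm_num)).differentiableAt) hL (convex_Icc 0 2) ht hs

/-- The cone map. -/
def lcMap (f g : ℝ → ℝ) (p : ℝ × ℝ) : ℝ × ℝ := (p.1 * f p.2, p.1 * g p.2)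

noncomputable def lcDer (f g : ℝ → ℝ) (p : ℝ × ℝ) : ℝ × ℝ →L[ℝ] ℝ × ℝ :=
  (Matrix.toLin (.finTwoProd ℝ) (.finTwoProd ℝ)
    !![f p.2, p.1 * deriv f p.2; g p.2, p.1 * deriv g p.2]).toContinuousLinearMap

lemma lcDer_det (f g : ℝ → ℝ) (p : ℝ × ℝ) : (lcDer f g p).det =
    - (2 * p.1 * ((deriv f p.2 * g p.2 - f p.2 * deriv g p.2) / 2)) := by
  unfold lcDer
  simp only [LinearMap.det_toContinuousLinearMap, LinearMap.det_toLin, Matrix.det_fin_two_of]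
  ring

lemma lcMap_hasStrict (f g : ℝ → ℝ) (hf : ContDiff ℝ 1 f) (hg : ContDiff ℝ 1 g) (p : ℝ × ℝ) :
    HasStrictFDerivAt (lcMap f g) (lcDer f g p) p := by
  have h1 : HasStrictDerivAt f (deriv f p.2) p.2 := hf.contDiffAt.hasStrictDerivAt (by norm_num)
  have h2 : HasStrictDerivAt g (deriv g p.2) p.2 := hg.contDiffAt.hasStrictDerivAt (by norm_num)
  unfold lcDer
  rw [Matrix.toLin_finTwoProd_toContinuousLinearMap]
  convert! HasStrictFDerivAt.prodMk (𝕜 := ℝ)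
    (hasStrictFDerivAt_fst.mul (h1.comp_hasStrictFDerivAt p hasStrictFDerivAt_snd))
    (hasStrictFDerivAt_fst.mul (h2.comp_hasStrictFDerivAt p hasStrictFDerivAt_snd)) using 2 <;>
  simp [smul_smul, add_comm]

lemma lc_anti
    (f g : ℝ → ℝ) (hf : ContDiff ℝ 1 f) (hg : ContDiff ℝ 1 g)
    (hfpos : ∀ ρ ∈ Set.Ioo (0 : ℝ) 2, 0 < f ρ)
    (hΔpos : ∀ ρ ∈ Set.Ioo (0 : ℝ) 2, 0 < (deriv f ρ * g ρ - f ρ * deriv g ρ) / 2) : StrictAntiOn (fun ρ => g ρ / f ρ) (Set.Ioo (0 : ℝ) 2) := by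
  have hd : ∀ x ∈ Set.Ioo (0 : ℝ) 2, HasDerivAt (fun ρ => g ρ / f ρ)
      ((deriv g x * f x - g x * deriv f x) / f x ^ 2) x := fun x hx =>
    ((hg.differentiable (by norm_num)).differentiableAt.hasDerivAt).div
      ((hf.differentiable (by norm_num)).differentiableAt.hasDerivAt) (hfpos x hx).ne'
  apply strictAntiOn_of_deriv_neg (convex_Ioo 0 2)
  · exact fun x hx => (hd x hx).continuousAt.continuousWithinAt
  · intro x hx
    rw [interior_Ioo] at hx
    rw [(hd x hx).deriv]
    apply div_neg_of_neg_of_pos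
    · linarith [hΔpos x hx]
    · have := hfpos x hx
      positivity

lemma lc_inj
    (f g : ℝ → ℝ) (hf : ContDiff ℝ 1 f) (hg : ContDiff ℝ 1 g)
    (hfpos : ∀ ρ ∈ Set.Ioo (0 : ℝ) 2, 0 < f ρ)
    (hΔpos : ∀ ρ ∈ Set.Ioo (0 : ℝ) 2, 0 < (deriv f ρ * g ρ - f ρ * deriv g ρ) / 2)
    {s t a b : ℝ} (hs : 0 < s) (ht : 0 < t) (ha : a ∈ Set.Ioo (0 : ℝ) 2)
    (hb : b ∈ Set.Ioo (0 : ℝ) 2) (h1 : s * f a = t * f b) (h2 : s * g a = t * g b) :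
    s = t ∧ a = b := by
  have fa := hfpos a ha
  have fb := hfpos b hb
  have hab : a = b := by
    apply (lc_anti f g hf hg hfpos hΔpos).injOn ha hb
    show g a / f a = g b / f b
    rw [← mul_div_mul_left _ _ hs.ne', ← mul_div_mul_left (g b) _ ht.ne', h1, h2]
  subst hab
  exact ⟨mul_right_cancel₀ fa.ne' h1, rfl⟩

lemma lc_isOpenImage
    (f g : ℝ → ℝ) (hf : ContDiff ℝ 1 f) (hg : ContDiff ℝ 1 g)
    (hΔpos : ∀ ρ ∈ Set.Ioo (0 : ℝ) 2, 0 < (deriv f ρ * g ρ - f ρ * deriv g ρ) / 2)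
    (R : ℝ) : IsOpen (lcMap f g '' (Set.Ioo 0 R ×ˢ Set.Ioo (0 : ℝ) 2)) := by
  rw [isOpen_iff_mem_nhds]
  rintro _ ⟨p, hp, rfl⟩
  have hdet : (lcDer f g p).det ≠ 0 := by
    rw [lcDer_det]
    have h1 := hΔpos _ hp.2
    have h2 : 0 < p.1 := hp.1.1
    exact (neg_lt_zero.2 (by positivity)).ne
  have h := lcMap_hasStrict f g hf hg p
  rw [← ContinuousLinearMap.coe_toContinuousLinearEquivOfDetNeZero _ hdet] at h
  rw [← h.map_nhds_eq_of_equiv]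
  exact Filter.image_mem_map ((isOpen_Ioo.prod isOpen_Ioo).mem_nhds hp)

lemma lc_volume
    (f g : ℝ → ℝ) (hf : ContDiff ℝ 1 f) (hg : ContDiff ℝ 1 g)
    (hfpos : ∀ ρ ∈ Set.Ioo (0 : ℝ) 2, 0 < f ρ)
    (hΔpos : ∀ ρ ∈ Set.Ioo (0 : ℝ) 2, 0 < (deriv f ρ * g ρ - f ρ * deriv g ρ) / 2)
    (R : ℝ) (hR : 0 ≤ R) :
    volume.real (lcMap f g '' (Set.Ioo 0 R ×ˢ Set.Ioo (0 : ℝ) 2)) =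
      R ^ 2 * ∫ ρ in (0 : ℝ)..2, (deriv f ρ * g ρ - f ρ * deriv g ρ) / 2 := by
  have hV : MeasurableSet (Set.Ioo 0 R ×ˢ Set.Ioo (0 : ℝ) 2) :=
    measurableSet_Ioo.prod measurableSet_Ioo
  have hinj : Set.InjOn (lcMap f g) (Set.Ioo 0 R ×ˢ Set.Ioo (0 : ℝ) 2) := by
    intro p hp q hq h
    rw [lcMap, lcMap, Prod.ext_iff] at h
    have := lc_inj f g hf hg hfpos hΔpos hp.1.1 hq.1.1 hp.2 hq.2 h.1 h.2
    exact Prod.ext this.1 this.2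
  have h := integral_image_eq_integral_abs_det_fderiv_smul volume hV
    (fun p _ => (lcMap_hasStrict f g hf hg p).hasFDerivAt.hasFDerivWithinAt) hinj
    (fun _ => (1 : ℝ))
  rw [setIntegral_const, smul_eq_mul, mul_one] at h
  rw [h]
  have h2 : ∫ p in Set.Ioo 0 R ×ˢ Set.Ioo (0 : ℝ) 2, |(lcDer f g p).det| • (1 : ℝ) =
      ∫ p in Set.Ioo 0 R ×ˢ Set.Ioo (0 : ℝ) 2,
        (2 * p.1) * ((deriv f p.2 * g p.2 - f p.2 * deriv g p.2) / 2) := by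
    apply setIntegral_congr_fun hV
    intro p hp
    have h1 := hΔpos _ hp.2
    have h2 : 0 < p.1 := hp.1.1
    simp only [lcDer_det, abs_neg, smul_eq_mul, mul_one]
    exact abs_of_pos (by positivity)
  rw [h2, Measure.volume_eq_prod, setIntegral_prod_mul (fun s : ℝ => 2 * s)
    (fun ρ : ℝ => (deriv f ρ * g ρ - f ρ * deriv g ρ) / 2),
    ← integral_Ioc_eq_integral_Ioo, ← integral_Ioc_eq_integral_Ioo,
    ← intervalIntegral.integral_of_le hR, ← intervalIntegral.integral_of_le (by norm_num)]
  congr 1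
  rw [intervalIntegral.integral_const_mul, integral_id]
  ring

/-- Lattice point count underlying Theorem 4.9: the number of integer pairs `(k,m)` with
`k ≥ 1` and `γ_{k,m} ≤ r` equals `(r²/4)·∫₀² Δ` up to an error of order `r`. -/
theorem lattice_count_gamma_le_r
    (ε : ℝ) (hε0 : 0 < ε) (hε1 : ε < 1 / 100)
    (f g : ℝ → ℝ) (hf : ContDiff ℝ (⊤ : ℕ∞) f) (hg : ContDiff ℝ (⊤ : ℕ∞) g)
    (hfg0 : ∀ ρ ∈ Set.Icc (0 : ℝ) (10 * ε), f ρ = ρ ^ 2 ∧ g ρ = 2 - ρ ^ 2)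
    (hfg2 : ∀ ρ ∈ Set.Icc (2 - 10 * ε) (2 : ℝ), f ρ = (2 - ρ) ^ 2 ∧ g ρ = -2 + (2 - ρ) ^ 2)
    (hfpos : ∀ ρ ∈ Set.Ioo (0 : ℝ) 2, 0 < f ρ)
    (hΔpos : ∀ ρ ∈ Set.Ioo (0 : ℝ) 2, 0 < (deriv f ρ * g ρ - f ρ * deriv g ρ) / 2)
    (rkm : ℤ → ℤ → ℝ)
    (hrkm : ∀ k m : ℤ, 1 ≤ k →
      rkm k m ∈ Set.Ioo (0 : ℝ) 2 ∧ (k : ℝ) * g (rkm k m) = (m : ℝ) * f (rkm k m)) :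
    ∃ c : ℝ, 0 < c ∧ ∀ r : ℝ, c ≤ r →
      {p : ℤ × ℤ | 1 ≤ p.1 ∧ 2 * (p.1 : ℝ) / f (rkm p.1 p.2) ≤ r}.Finite ∧
      |({p : ℤ × ℤ | 1 ≤ p.1 ∧ 2 * (p.1 : ℝ) / f (rkm p.1 p.2) ≤ r}.ncard : ℝ) -
          r ^ 2 / 4 * ∫ ρ in (0 : ℝ)..2, (deriv f ρ * g ρ - f ρ * deriv g ρ) / 2|
        ≤ c * r := by
  classical
  have hf1 : ContDiff ℝ 1 f := hf.of_le (by exact_mod_cast le_top)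
  have hg1 : ContDiff ℝ 1 g := hg.of_le (by exact_mod_cast le_top)
  obtain ⟨L1, hL1⟩ := lc_bdd (deriv f) (hf1.continuous_deriv le_rfl)
  obtain ⟨L2, hL2⟩ := lc_bdd (deriv g) (hg1.continuous_deriv le_rfl)
  obtain ⟨M1, hM1⟩ := lc_bdd f hf1.continuous
  obtain ⟨M2, hM2⟩ := lc_bdd g hg1.continuous
  set L : ℕ := L1 + L2 + 2 with hL
  have hLf := lc_lip f hf1 L fun t ht => (hL1 t ht).trans (by norm_cast; omega)
  have hLg := lc_lip g hg1 L fun t ht => (hL2 t ht).trans (by norm_cast; omega)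
  have hL0 : ∀ s ∈ Set.Icc (0 : ℝ) 2, ∀ t ∈ Set.Icc (0 : ℝ) 2,
      |(fun _ : ℝ => (0 : ℝ)) s - (fun _ : ℝ => (0 : ℝ)) t| ≤ L * |s - t| := by
    intro s _ t _
    simp only [sub_self, abs_zero]
    positivity
  have hLl : ∀ s ∈ Set.Icc (0 : ℝ) 2, ∀ t ∈ Set.Icc (0 : ℝ) 2,
      |(fun x : ℝ => 2 - 2 * x) s - (fun x : ℝ => 2 - 2 * x) t| ≤ L * |s - t| := by
    intro s _ t _
    have e : (2 - 2 * s) - (2 - 2 * t) = -(2 * (s - t)) := by ring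
    simp only [e, abs_neg, abs_mul, abs_two]
    gcongr
    norm_cast
    omega
  have hpos : (0 : ℝ) < 5 * (2 * L + 5) ^ 2 := by positivity
  refine ⟨5 * (2 * L + 5) ^ 2, hpos, ?_⟩
  intro r hr
  have hr2 : 2 ≤ r := by
    have : (0 : ℝ) ≤ L := by positivity
    nlinarith
  obtain ⟨R, rfl⟩ : ∃ R, r = 2 * R := ⟨r / 2, by ring⟩
  have hR : 1 ≤ R := by linarith
  set S : Set (ℤ × ℤ) := {p : ℤ × ℤ | 1 ≤ p.1 ∧ 2 * (p.1 : ℝ) / f (rkm p.1 p.2) ≤ 2 * R} with hS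
  obtain ⟨B1, hB1c, hB1⟩ := lc_cover f g L hLf hLg R hR
  obtain ⟨B2, hB2c, hB2⟩ := lc_cover _ _ L hL0 hLl R hR
  have f0 : f 0 = 0 ∧ g 0 = 2 := by simpa using hfg0 0 ⟨le_rfl, by linarith⟩
  have f2 : f 2 = 0 ∧ g 2 = -2 := by simpa using hfg2 2 ⟨by linarith, le_rfl⟩
  set U := lcMap f g '' (Set.Ioo 0 R ×ˢ Set.Ioo (0 : ℝ) 2) with hU
  set K := lcMap f g '' (Set.Icc 0 R ×ˢ Set.Icc (0 : ℝ) 2) with hK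
  have hUo : IsOpen U := lc_isOpenImage f g hf1 hg1 hΔpos R
  have hKc : IsClosed K := by
    apply IsCompact.isClosed
    apply (isCompact_Icc.prod isCompact_Icc).image
    have := hf1.continuous
    have := hg1.continuous
    unfold lcMap
    fun_prop
  have hUK : U ⊆ K := Set.image_mono (Set.prod_mono Set.Ioo_subset_Icc_self Set.Ioo_subset_Icc_self)
  have hSmem : ∀ p ∈ S, ∃ s ∈ Set.Icc 0 R, ∃ ρ ∈ Set.Ioo (0 : ℝ) 2,
      lcMap f g (s, ρ) = ((p.1 : ℝ), (p.2 : ℝ)) := by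
    rintro ⟨k, m⟩ ⟨hk, hp⟩
    obtain ⟨hρ, he⟩ := hrkm k m hk
    simp only at hp hk
    have hfp := hfpos _ hρ
    have hk' : (0 : ℝ) < k := by exact_mod_cast hk
    refine ⟨k / f (rkm k m), ⟨by positivity, ?_⟩, rkm k m, hρ, ?_⟩
    · rw [mul_div_assoc] at hp
      linarith
    · simp only [lcMap, Prod.mk.injEq]
      constructor
      · field_simp
      · rw [div_mul_eq_mul_div, he]
        field_simp
  -- points of K off U
  have hKU : ∀ x ∈ K, x ∉ U → ∀ p : ℤ × ℤ, x ∈ Set.Icc (p.1 : ℝ) (p.1 + 1) ×ˢ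
      Set.Icc (p.2 : ℝ) (p.2 + 1) → p ∈ B1 ∪ B2 := by
    rintro _ ⟨⟨s, ρ⟩, ⟨hs, hρ⟩, rfl⟩ hxU p ⟨h1, h2⟩
    simp only [lcMap, Set.mem_Icc] at h1 h2 hs hρ
    have axis : ∀ y : ℝ, |y| ≤ 2 * R → s * f ρ = 0 → s * g ρ = y → p ∈ B1 ∪ B2 := by
      intro y hy e1 e2
      rw [e1] at h1
      rw [e2] at h2
      rw [abs_le] at hy
      apply Finset.mem_union_right
      have e : R * (2 - 2 * ((2 - y / R) / 2)) = y := by field_simp; ring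
      refine hB2 ((2 - y / R) / 2) ⟨?_, ?_⟩ p ?_ ?_ ?_ ?_
      · have : y / R ≤ 2 := by rw [div_le_iff₀ (by linarith)]; exact hy.2
        linarith
      · have : -2 ≤ y / R := by rw [le_div_iff₀ (by linarith)]; linarith [hy.1]
        linarith
      · simpa using h1.1
      · simpa using h1.2
      · simp only [e]; exact h2.1
      · simp only [e]; exact h2.2
    rcases hρ.1.eq_or_lt with h | hρ0
    · subst h
      refine axis (s * 2) ?_ (by rw [f0.1, mul_zero]) (by rw [f0.2])
      rw [abs_of_nonneg (by linarith [hs.1])]; linarith [hs.2]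
    rcases hρ.2.eq_or_lt with h | hρ2
    · subst h
      refine axis (s * (-2)) ?_ (by rw [f2.1, mul_zero]) (by rw [f2.2])
      rw [abs_of_nonpos (by linarith [hs.1])]; linarith [hs.2]
    rcases hs.1.eq_or_lt with h | hs0
    · subst h
      exact axis 0 (by rw [abs_zero]; linarith) (by simp) (by simp)
    rcases hs.2.eq_or_lt with h | hsR
    · subst h
      exact Finset.mem_union_left _ (hB1 ρ ⟨hρ.1, hρ.2⟩ p h1.1 h1.2 h2.1 h2.2)
    · exact absurd ⟨(s, ρ), ⟨⟨hs0, hsR⟩, ⟨hρ0, hρ2⟩⟩, rfl⟩ hxU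
  -- bounding box
  obtain ⟨W, hW⟩ := exists_nat_ge (R * (M1 + M2) + 1)
  have hKb : ∀ x ∈ K, |x.1| ≤ R * (M1 + M2) ∧ |x.2| ≤ R * (M1 + M2) := by
    rintro _ ⟨⟨s, ρ⟩, ⟨hs, hρ⟩, rfl⟩
    have a1 := hM1 ρ hρ
    have a2 := hM2 ρ hρ
    have b1 : (0 : ℝ) ≤ M1 := by positivity
    have b2 : (0 : ℝ) ≤ M2 := by positivity
    simp only [lcMap, abs_mul, abs_of_nonneg hs.1]
    constructor <;>
    · apply mul_le_mul hs.2 _ (abs_nonneg _) (by linarith)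
      linarith
  set T : Finset (ℤ × ℤ) := Finset.Icc (-(W : ℤ)) W ×ˢ Finset.Icc (-(W : ℤ)) W with hT
  have hfl : ∀ y : ℝ, |y| ≤ R * (M1 + M2) → ⌊y⌋ ∈ Finset.Icc (-(W : ℤ)) W := by
    intro y hy
    rw [abs_le] at hy
    rw [Finset.mem_Icc]
    constructor
    · rw [Int.le_floor]; push_cast; linarith [hy.1]
    · have : (⌊y⌋ : ℝ) ≤ ((W : ℤ) : ℝ) := by
        push_cast; linarith [hy.2, Int.floor_le y]
      exact_mod_cast this
  have hST : S ⊆ (T : Set (ℤ × ℤ)) := by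
    intro p hp
    obtain ⟨s, hs, ρ, hρ, he⟩ := hSmem p hp
    have := hKb _ ⟨(s, ρ), ⟨hs, Set.Ioo_subset_Icc_self hρ⟩, he⟩
    have h1 := hfl _ this.1
    have h2 := hfl _ this.2
    simp only [Int.floor_intCast] at h1 h2
    exact Finset.mem_coe.2 (Finset.mem_product.2 ⟨h1, h2⟩)
  have hUT : ∀ x ∈ U, (⌊x.1⌋, ⌊x.2⌋) ∈ T := by
    intro x hx
    have := hKb x (hUK hx)
    exact Finset.mem_product.2 ⟨hfl _ this.1, hfl _ this.2⟩
  refine ⟨T.finite_toSet.subset hST, ?_⟩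
  have main := lc_count S U (B1 ∪ B2) T hUo.measurableSet hST hUT ?_
  · rw [lc_volume f g hf1 hg1 hfpos hΔpos R (by linarith)] at main
    have e : (2 * R) ^ 2 / 4 = R ^ 2 := by ring
    rw [e]
    refine main.trans ?_
    have : ((B1 ∪ B2).card : ℝ) ≤ B1.card + B2.card := by
      exact_mod_cast Finset.card_union_le B1 B2
    linarith
  · intro p hp
    have hconn : IsPreconnected (Set.Icc (p.1 : ℝ) (p.1 + 1) ×ˢ Set.Icc (p.2 : ℝ) (p.2 + 1)) :=
      isPreconnected_Icc.prod isPreconnected_Icc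
    have hsub : lcBox p ⊆ Set.Icc (p.1 : ℝ) (p.1 + 1) ×ˢ Set.Icc (p.2 : ℝ) (p.2 + 1) :=
      Set.prod_mono Set.Ico_subset_Icc_self Set.Ico_subset_Icc_self
    have hpmem : ((p.1 : ℝ), (p.2 : ℝ)) ∈
        Set.Icc (p.1 : ℝ) (p.1 + 1) ×ˢ Set.Icc (p.2 : ℝ) (p.2 + 1) := by
      simp
    rcases hconn.subset_or_subset hUo hKc.isOpen_compl
      (Set.disjoint_left.2 fun x hx hx' => hx' (hUK hx)) (by
        intro x hx
        by_cases hxK : x ∈ K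
        · left
          by_contra hxU
          exact hp (hKU x hxK hxU p hx)
        · exact Or.inr hxK) with h | h
    · left
      refine ⟨?_, hsub.trans h⟩
      obtain ⟨⟨s, ρ⟩, ⟨hs, hρ⟩, he⟩ := h hpmem
      simp only [lcMap, Prod.mk.injEq, Set.mem_Ioo] at he hs hρ
      have hfρ := hfpos ρ hρ
      have hk0 : (0 : ℝ) < p.1 := by rw [← he.1]; exact mul_pos hs.1 hfρ
      have hk : 1 ≤ p.1 := by
        have : 0 < p.1 := by exact_mod_cast hk0
        omega
      obtain ⟨hρ', he'⟩ := hrkm p.1 p.2 hk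
      have hfp := hfpos _ hρ'
      have := lc_inj f g hf1 hg1 hfpos hΔpos (s := s) (t := p.1 / f (rkm p.1 p.2)) hs.1
        (by positivity) hρ hρ' (by rw [he.1]; field_simp)
        (by rw [he.2, div_mul_eq_mul_div, he']; field_simp)
      refine ⟨hk, ?_⟩
      rw [mul_div_assoc, ← this.1]
      linarith [hs.2]
    · right
      refine ⟨fun hpS => ?_, ?_⟩
      · obtain ⟨s, hs, ρ, hρ, he⟩ := hSmem p hpS
        exact h hpmem ⟨(s, ρ), ⟨hs, Set.Ioo_subset_Icc_self hρ⟩, he⟩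
      · exact Set.disjoint_left.2 fun x hx hx' => h (hsub hx) (hUK hx')
end

section
/- There exists a constant c > 0 such that for every real number r ≥ c, the number of pairs of integers (k, m) with k ≥ 1, m ≥ k/V and γ_{k,m} ≤ r differs from (r²/4)·∫₀¹ Δ(ρ) dρ by at most c·r; that is, |#{(k,m) ∈ ℤ² : k ≥ 1, m ≥ k/V, γ_{k,m} ≤ r} − (r²/4)∫₀¹ Δ(ρ) dρ| ≤ c·r. -/
open MeasureTheory
open scoped Pointwise

/-- `F` is, at scale `R`, covered by `O(R)` balls of bounded radius. -/
def LinCov (F : Set (ℝ × ℝ)) : Prop :=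
  ∃ L C : ℝ, 0 ≤ L ∧ 0 ≤ C ∧ ∀ R : ℝ, 1 ≤ R → ∃ Z : Finset (ℝ × ℝ), (Z.card : ℝ) ≤ C * R ∧
    ∀ y ∈ F, ∃ z ∈ Z, dist (R • y) z ≤ L

lemma LinCov.union {F G : Set (ℝ × ℝ)} (hF : LinCov F) (hG : LinCov G) : LinCov (F ∪ G) := by
  classical
  obtain ⟨L, C, hL, hC, h⟩ := hF
  obtain ⟨L', C', hL', hC', h'⟩ := hG
  refine ⟨max L L', C + C', le_max_of_le_left hL, by positivity, fun R hR => ?_⟩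
  obtain ⟨Z, hZ, hc⟩ := h R hR
  obtain ⟨Z', hZ', hc'⟩ := h' R hR
  refine ⟨Z ∪ Z', ?_, ?_⟩
  · have : ((Z ∪ Z').card : ℝ) ≤ Z.card + Z'.card := by exact_mod_cast Finset.card_union_le Z Z'
    linarith
  · rintro y (hy | hy)
    · obtain ⟨z, hz, hd⟩ := hc y hy
      exact ⟨z, Finset.mem_union_left _ hz, hd.trans (le_max_left _ _)⟩
    · obtain ⟨z, hz, hd⟩ := hc' y hy
      exact ⟨z, Finset.mem_union_right _ hz, hd.trans (le_max_right _ _)⟩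

lemma LinCov.mono {F G : Set (ℝ × ℝ)} (hG : LinCov G) (h : F ⊆ G) : LinCov F := by
  obtain ⟨L, C, hL, hC, h'⟩ := hG
  refine ⟨L, C, hL, hC, fun R hR => ?_⟩
  obtain ⟨Z, hZ, hc⟩ := h' R hR
  exact ⟨Z, hZ, fun y hy => hc y (h hy)⟩

lemma linCov_curve (γ : ℝ → ℝ × ℝ) (hγ : ContDiff ℝ 1 γ) : LinCov (γ '' Set.Icc 0 1) := by
  classical
  obtain ⟨K, hK⟩ := (hγ.contDiffOn (s := Set.Icc (0:ℝ) 1)).exists_lipschitzOnWith one_ne_zero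
    (convex_Icc _ _) isCompact_Icc
  refine ⟨K, 3, K.2, by norm_num, fun R hR => ?_⟩
  set n := ⌈R⌉₊ with hn
  have hRn : R ≤ n := Nat.le_ceil R
  have hnR : (n : ℝ) < R + 1 := Nat.ceil_lt_add_one (by linarith)
  have hn0 : (0 : ℝ) < n := by linarith
  refine ⟨(Finset.range (n + 1)).image (fun j : ℕ => R • γ ((j : ℝ) / n)), ?_, ?_⟩
  · have : (((Finset.range (n + 1)).image (fun j : ℕ => R • γ ((j : ℝ) / n))).card : ℝ)
        ≤ (n + 1 : ℕ) := by
      exact_mod_cast Finset.card_image_le.trans (by simp)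
    push_cast at this
    linarith
  · rintro _ ⟨s, hs, rfl⟩
    have hsn : 0 ≤ s * n := mul_nonneg hs.1 hn0.le
    have h1 : (⌊s * n⌋₊ : ℝ) ≤ s * n := Nat.floor_le hsn
    have h2 : s * n < ⌊s * n⌋₊ + 1 := Nat.lt_floor_add_one _
    have hsn' : s * n ≤ n := by nlinarith [hs.2]
    refine ⟨_, Finset.mem_image_of_mem _ (a := ⌊s * n⌋₊) ?_, ?_⟩
    · rw [Finset.mem_range]
      have : (⌊s * n⌋₊ : ℝ) ≤ n := h1.trans hsn'
      have : ⌊s * n⌋₊ ≤ n := by exact_mod_cast this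
      omega
    · have hj : (⌊s * n⌋₊ : ℝ) / n ∈ Set.Icc (0 : ℝ) 1 :=
        ⟨by positivity, by rw [div_le_one hn0]; linarith⟩
      have hd := hK.dist_le_mul s hs _ hj
      have : dist s ((⌊s * n⌋₊ : ℝ) / n) ≤ 1 / n := by
        rw [Real.dist_eq, abs_le]
        constructor
        · rw [neg_le_sub_iff_le_add]
          have : (⌊s * n⌋₊ : ℝ) / n ≤ s := by rw [div_le_iff₀ hn0]; exact h1
          have : 0 ≤ 1 / (n : ℝ) := by positivity
          linarith
        · rw [sub_le_iff_le_add, ← add_div, le_div_iff₀ hn0]; linarith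
      rw [dist_smul₀, Real.norm_of_nonneg (by linarith)]
      calc R * dist (γ s) (γ ((⌊s * n⌋₊ : ℝ) / n)) ≤ R * (K * (1 / n)) := by
            have : (0:ℝ) ≤ K := K.2
            gcongr
            exact hd.trans (by gcongr)
        _ = K * (R / n) := by ring
        _ ≤ K * 1 := by
            have : (0:ℝ) ≤ K := K.2
            gcongr
            rwa [div_le_one hn0]
        _ = K := mul_one _

lemma cross_frontier (B : Set (ℝ × ℝ)) (x y : ℝ × ℝ) (hxy : dist x y ≤ 1)
    (h : ¬ (x ∈ B ↔ y ∈ B)) : ∃ z ∈ frontier B, dist x z ≤ 1 := by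
  have hc : IsPreconnected (segment ℝ x y) := (convex_segment x y).isPreconnected
  have hsub : segment ℝ x y ⊆ Metric.closedBall x 1 :=
    (convex_closedBall x 1).segment_subset (Metric.mem_closedBall_self zero_le_one)
      (by rwa [Metric.mem_closedBall, dist_comm])
  have hx := left_mem_segment ℝ x y
  have hy := right_mem_segment ℝ x y
  have : (segment ℝ x y ∩ frontier B).Nonempty := by
    by_contra hne
    apply h
    rw [Set.not_nonempty_iff_eq_empty] at hne
    have hcov : segment ℝ x y ⊆ interior B ∪ interior Bᶜ := by
      intro z hz
      by_contra hz'
      have : z ∈ segment ℝ x y ∩ frontier B := by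
        refine ⟨hz, ?_⟩
        rw [frontier_eq_closure_inter_closure]
        simp only [Set.mem_union, not_or] at hz'
        rw [closure_eq_compl_interior_compl, closure_eq_compl_interior_compl, compl_compl]
        exact ⟨hz'.2, hz'.1⟩
      rw [hne] at this
      exact this
    by_contra hiff
    have key : ∀ a ∈ segment ℝ x y, ∀ b ∈ segment ℝ x y, a ∈ B → b ∉ B → False := by
      intro a ha b hb haB hbB
      have h1 : a ∈ interior B := (hcov ha).resolve_right fun h => (interior_subset h) haB
      have h2 : b ∈ interior Bᶜ := (hcov hb).resolve_left fun h => hbB (interior_subset h)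
      obtain ⟨z, -, hz1, hz2⟩ := hc _ _ isOpen_interior isOpen_interior hcov ⟨a, ha, h1⟩ ⟨b, hb, h2⟩
      exact (interior_subset hz2) (interior_subset hz1)
    by_cases hxB : x ∈ B <;> by_cases hyB : y ∈ B
    · exact hiff (iff_of_true hxB hyB)
    · exact key x hx y hy hxB hyB
    · exact key y hy x hx hyB hxB
    · exact hiff (iff_of_false hxB hyB)
  obtain ⟨z, hz, hzf⟩ := this
  exact ⟨z, hzf, by rw [dist_comm]; exact hsub hz⟩

/-- The lattice points of `B`. -/
def latPts (B : Set (ℝ × ℝ)) : Set (ℤ × ℤ) := {p | ((p.1 : ℝ), (p.2 : ℝ)) ∈ B}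

lemma latPts_finite {B : Set (ℝ × ℝ)} (hB : Bornology.IsBounded B) : (latPts B).Finite := by
  obtain ⟨M, hM⟩ := hB.subset_closedBall 0
  apply ((Set.finite_Icc (-⌈M⌉) ⌈M⌉).prod (Set.finite_Icc (-⌈M⌉) ⌈M⌉)).subset
  rintro ⟨a, b⟩ hp
  have := hM hp
  rw [mem_closedBall_zero_iff, Prod.norm_def, max_le_iff] at this
  simp only [Real.norm_eq_abs, abs_le] at this
  have hc := Int.le_ceil M
  simp only [Set.mem_prod, Set.mem_Icc]
  refine ⟨⟨?_, ?_⟩, ?_, ?_⟩ <;> rify <;> linarith [this.1.1, this.1.2, this.2.1, this.2.2]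

/-- Unit square with lower left corner `p`. -/
def usq (p : ℤ × ℤ) : Set (ℝ × ℝ) := Set.Ico (p.1 : ℝ) (p.1 + 1) ×ˢ Set.Ico (p.2 : ℝ) (p.2 + 1)

lemma mem_sq {p : ℤ × ℤ} {x : ℝ × ℝ} : x ∈ usq p ↔ ⌊x.1⌋ = p.1 ∧ ⌊x.2⌋ = p.2 := by
  simp [usq, Int.floor_eq_iff]

lemma dist_sq {p : ℤ × ℤ} {x : ℝ × ℝ} (h : x ∈ usq p) : dist x ((p.1 : ℝ), (p.2 : ℝ)) ≤ 1 := by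
  simp only [usq, Set.mem_prod, Set.mem_Ico] at h
  rw [Prod.dist_eq, max_le_iff, Real.dist_eq, Real.dist_eq, abs_le, abs_le]
  refine ⟨⟨?_, ?_⟩, ?_, ?_⟩ <;> simp only <;> linarith [h.1.1, h.1.2, h.2.1, h.2.2]

lemma measurableSet_sq (p : ℤ × ℤ) : MeasurableSet (usq p) :=
  measurableSet_Ico.prod measurableSet_Ico

lemma volume_sq (p : ℤ × ℤ) : volume (usq p) = 1 := by
  rw [usq, Measure.volume_eq_prod, Measure.prod_prod]
  simp

lemma volume_ball (z : ℝ × ℝ) (L : ℝ) (hL : 0 ≤ L) :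
    volume.real (Metric.closedBall z L) = (2 * L) ^ 2 := by
  rw [← closedBall_prod_same z.1 z.2 L, Measure.real, Measure.volume_eq_prod, Measure.prod_prod]
  simp [Real.volume_closedBall, ENNReal.toReal_ofReal, hL]
  ring

lemma count_general (A : Set (ℝ × ℝ)) (hb : Bornology.IsBounded A) (hF : LinCov (frontier A)) :
    ∃ C : ℝ, 0 ≤ C ∧ ∀ R : ℝ, 1 ≤ R →
      |((latPts (R • A)).ncard : ℝ) - R ^ 2 * volume.real A| ≤ C * R := by
  classical
  obtain ⟨L, C, hL, hC, h⟩ := hF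
  refine ⟨C * (2 * (L + 1)) ^ 2, by positivity, fun R hR => ?_⟩
  obtain ⟨Z, hZ, hc⟩ := h R hR
  have hR0 : R ≠ 0 := by linarith
  set B := R • A with hB
  have hBb : Bornology.IsBounded B := hb.smul₀ R
  have hfB : frontier B ⊆ R • frontier A := by
    have := (Homeomorph.smulOfNeZero (α := ℝ × ℝ) R hR0).image_frontier A
    have h2 : frontier (R • A) = R • frontier A := this.symm
    rw [hB, h2]
  have hvB : volume.real B = R ^ 2 * volume.real A := by
    rw [hB, Measure.real, Measure.addHaar_smul]
    simp [Measure.real]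
    left
    positivity
  have hfin := latPts_finite hBb
  set P := hfin.toFinset with hP
  have hcard : (latPts B).ncard = P.card := Set.ncard_eq_toFinset_card _ hfin
  set U := ⋃ p ∈ P, usq p with hU
  set E := ⋃ z ∈ Z, Metric.closedBall z (L + 1) with hE
  have hvU : volume.real U = P.card := by
    rw [hU, measureReal_biUnion_finset (h := fun p _ => by rw [volume_sq]; simp)]
    · simp [Measure.real, volume_sq]
    · intro p _ q _ hpq
      rw [Function.onFun, Set.disjoint_left]
      intro x hx hx'
      rw [mem_sq] at hx hx'
      exact hpq (Prod.ext (hx.1.symm.trans hx'.1) (hx.2.symm.trans hx'.2))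
    · exact fun p _ => measurableSet_sq p
  have hvE : volume.real E ≤ C * (2 * (L + 1)) ^ 2 * R := by
    calc volume.real E ≤ ∑ z ∈ Z, volume.real (Metric.closedBall z (L + 1)) :=
          measureReal_biUnion_finset_le _ _
      _ = Z.card * (2 * (L + 1)) ^ 2 := by
          rw [Finset.sum_congr rfl fun z _ => volume_ball z (L + 1) (by linarith)]
          simp
      _ ≤ (C * R) * (2 * (L + 1)) ^ 2 := by gcongr
      _ = _ := by ring
  have key : ∀ x : ℝ × ℝ, ∀ p : ℤ × ℤ, x ∈ usq p → ¬ (x ∈ B ↔ ((p.1 : ℝ), (p.2 : ℝ)) ∈ B) → x ∈ E := by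
    intro x p hx hn
    obtain ⟨w, hw, hd⟩ := cross_frontier B x _ (dist_sq hx) hn
    obtain ⟨y, hy, rfl⟩ := hfB hw
    obtain ⟨z, hz, hd'⟩ := hc y hy
    simp only [hE, Set.mem_iUnion, Metric.mem_closedBall]
    refine ⟨z, hz, (dist_triangle _ _ _).trans (by simp only at hd; linarith)⟩
  have hBU : B ⊆ U ∪ E := by
    intro x hx
    by_cases hp : (⌊x.1⌋, ⌊x.2⌋) ∈ P
    · left
      simp only [hU, Set.mem_iUnion]
      exact ⟨_, hp, mem_sq.2 ⟨rfl, rfl⟩⟩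
    · right
      refine key x (⌊x.1⌋, ⌊x.2⌋) (mem_sq.2 ⟨rfl, rfl⟩) fun hi => hp ?_
      rw [hP, Set.Finite.mem_toFinset]
      exact hi.1 hx
  have hUB : U ⊆ B ∪ E := by
    intro x hx
    simp only [hU, Set.mem_iUnion] at hx
    obtain ⟨p, hp, hxp⟩ := hx
    rw [hP, Set.Finite.mem_toFinset] at hp
    by_cases hxB : x ∈ B
    · exact Or.inl hxB
    · exact Or.inr (key x p hxp fun hi => hxB (hi.2 hp))
  have hEf : volume E ≠ ⊤ := by
    rw [hE]
    exact ((measure_biUnion_finset_le _ _).trans_lt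
      (ENNReal.sum_lt_top.2 fun z _ => Metric.isBounded_closedBall.measure_lt_top)).ne
  have hUf : volume U ≠ ⊤ := by
    rw [hU]
    exact ((measure_biUnion_finset_le _ _).trans_lt
      (ENNReal.sum_lt_top.2 fun z _ => by rw [volume_sq]; simp)).ne
  have hBf : volume B ≠ ⊤ := hBb.measure_lt_top.ne
  have h1 : volume.real B ≤ volume.real U + volume.real E :=
    (measureReal_mono hBU (measure_union_ne_top hUf hEf)).trans (measureReal_union_le _ _)
  have h2 : volume.real U ≤ volume.real B + volume.real E :=
    (measureReal_mono hUB (measure_union_ne_top hBf hEf)).trans (measureReal_union_le _ _)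
  rw [hcard, ← hvU, ← hvB, abs_le]
  constructor <;> linarith

/-- The parametrisation of the cone over the curve `(f, g)`. -/
def coneMap (f g : ℝ → ℝ) (p : ℝ × ℝ) : ℝ × ℝ := (p.1 * f p.2, p.1 * g p.2)

/-- The derivative of `coneMap`. -/
noncomputable def coneDeriv (f g : ℝ → ℝ) (p : ℝ × ℝ) : ℝ × ℝ →L[ℝ] ℝ × ℝ :=
  (Matrix.toLin (.finTwoProd ℝ) (.finTwoProd ℝ)
    !![f p.2, p.1 * deriv f p.2; g p.2, p.1 * deriv g p.2]).toContinuousLinearMap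

lemma det_coneDeriv (f g : ℝ → ℝ) (p : ℝ × ℝ) :
    (coneDeriv f g p).det = p.1 * (f p.2 * deriv g p.2 - deriv f p.2 * g p.2) := by
  unfold coneDeriv
  simp only [LinearMap.det_toContinuousLinearMap, LinearMap.det_toLin, Matrix.det_fin_two_of]
  ring

lemma hasFDerivAt_coneMap (f g : ℝ → ℝ) (hf : Differentiable ℝ f) (hg : Differentiable ℝ g)
    (p : ℝ × ℝ) : HasFDerivAt (coneMap f g) (coneDeriv f g p) p := by
  unfold coneDeriv
  rw [Matrix.toLin_finTwoProd_toContinuousLinearMap]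
  convert!
    HasFDerivAt.prodMk (𝕜 := ℝ)
      (hasFDerivAt_fst.mul ((hf p.2).hasDerivAt.comp_hasFDerivAt p hasFDerivAt_snd))
      (hasFDerivAt_fst.mul ((hg p.2).hasDerivAt.comp_hasFDerivAt p hasFDerivAt_snd)) using
    2 <;>
  simp [smul_smul, add_comm]

lemma contDiff_coneMap (f g : ℝ → ℝ) (hf : ContDiff ℝ 1 f) (hg : ContDiff ℝ 1 g) :
    ContDiff ℝ 1 (coneMap f g) := by
  unfold coneMap
  fun_prop

lemma coneMap_mem_interior (f g : ℝ → ℝ) (hf : ContDiff ℝ 1 f) (hg : ContDiff ℝ 1 g)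
    (p : ℝ × ℝ) (s : Set (ℝ × ℝ)) (hs : s ∈ nhds p) (hdet : (coneDeriv f g p).det ≠ 0) :
    coneMap f g p ∈ interior (coneMap f g '' s) := by
  have h1 : HasStrictFDerivAt (coneMap f g) (coneDeriv f g p) p := by
    have := (contDiff_coneMap f g hf hg).contDiffAt (x := p) |>.hasStrictFDerivAt one_ne_zero
    rwa [(hasFDerivAt_coneMap f g (hf.differentiable one_ne_zero)
      (hg.differentiable one_ne_zero) p).fderiv] at this
  have h2 : HasStrictFDerivAt (coneMap f g)
      (((coneDeriv f g p).toContinuousLinearEquivOfDetNeZero hdet : (ℝ × ℝ) ≃L[ℝ] (ℝ × ℝ)) :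
        (ℝ × ℝ) →L[ℝ] (ℝ × ℝ)) p := by
    simpa using h1
  rw [mem_interior_iff_mem_nhds, ← h2.map_nhds_eq_of_equiv]
  exact Filter.image_mem_map hs

/-- The half open square. -/
def hsq : Set (ℝ × ℝ) := Set.Ioc (0 : ℝ) 1 ×ˢ Set.Ioc (0 : ℝ) 1

lemma cone_bounded (f g : ℝ → ℝ) (hf : ContDiff ℝ 1 f) (hg : ContDiff ℝ 1 g) :
    IsCompact (coneMap f g '' (Set.Icc (0 : ℝ) 1 ×ˢ Set.Icc (0 : ℝ) 1)) :=
  (isCompact_Icc.prod isCompact_Icc).image (contDiff_coneMap f g hf hg).continuous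

lemma hsq_sub : hsq ⊆ Set.Icc (0 : ℝ) 1 ×ˢ Set.Icc (0 : ℝ) 1 :=
  Set.prod_mono Set.Ioc_subset_Icc_self Set.Ioc_subset_Icc_self

lemma cone_frontier (f g : ℝ → ℝ) (hf : ContDiff ℝ 1 f) (hg : ContDiff ℝ 1 g)
    (hdet : ∀ p ∈ hsq, (coneDeriv f g p).det ≠ 0) : LinCov (frontier (coneMap f g '' hsq)) := by
  have hΦ := contDiff_coneMap f g hf hg
  have c1 := linCov_curve (fun t => coneMap f g (t, 0)) (by fun_prop)
  have c2 := linCov_curve (fun t => coneMap f g (t, 1)) (by fun_prop)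
  have c3 := linCov_curve (fun t => coneMap f g (0, t)) (by fun_prop)
  have c4 := linCov_curve (fun t => coneMap f g (1, t)) (by fun_prop)
  refine ((c1.union c2).union (c3.union c4)).mono ?_
  intro y hy
  have hyK : y ∈ coneMap f g '' (Set.Icc (0 : ℝ) 1 ×ˢ Set.Icc (0 : ℝ) 1) :=
    closure_minimal (Set.image_mono hsq_sub) (cone_bounded f g hf hg).isClosed hy.1
  obtain ⟨⟨t, ρ⟩, ⟨⟨ht0, ht1⟩, hρ0, hρ1⟩, rfl⟩ := hyK
  simp only at ht0 ht1 hρ0 hρ1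
  rcases ht0.eq_or_lt with rfl | ht0'
  · exact Or.inr (Or.inl ⟨ρ, ⟨hρ0, hρ1⟩, rfl⟩)
  rcases ht1.eq_or_lt with rfl | ht1'
  · exact Or.inr (Or.inr ⟨ρ, ⟨hρ0, hρ1⟩, rfl⟩)
  rcases hρ0.eq_or_lt with rfl | hρ0'
  · exact Or.inl (Or.inl ⟨t, ⟨ht0, ht1⟩, rfl⟩)
  rcases hρ1.eq_or_lt with rfl | hρ1'
  · exact Or.inl (Or.inr ⟨t, ⟨ht0, ht1⟩, rfl⟩)
  exfalso
  apply hy.2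
  apply coneMap_mem_interior f g hf hg
  · exact prod_mem_nhds (Ioc_mem_nhds ht0' ht1') (Ioc_mem_nhds hρ0' hρ1')
  · exact hdet _ ⟨⟨ht0', ht1⟩, hρ0', hρ1⟩

lemma cone_volume (f g : ℝ → ℝ) (hf : ContDiff ℝ 1 f) (hg : ContDiff ℝ 1 g)
    (hpos : ∀ ρ ∈ Set.Ioc (0 : ℝ) 1, 0 < (deriv f ρ * g ρ - f ρ * deriv g ρ) / 2)
    (hinj : Set.InjOn (coneMap f g) hsq) :
    volume.real (coneMap f g '' hsq) =
      ∫ ρ in (0 : ℝ)..1, (deriv f ρ * g ρ - f ρ * deriv g ρ) / 2 := by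
  have hm : MeasurableSet hsq := measurableSet_Ioc.prod measurableSet_Ioc
  have h := integral_image_eq_integral_abs_det_fderiv_smul volume hm
    (fun p _ => (hasFDerivAt_coneMap f g (hf.differentiable one_ne_zero)
      (hg.differentiable one_ne_zero) p).hasFDerivWithinAt) hinj (fun _ => (1 : ℝ))
  have h1 : ∫ x in coneMap f g '' hsq, (1 : ℝ) = volume.real (coneMap f g '' hsq) := by simp
  rw [← h1, h]
  have h2 : ∫ p in hsq, |(coneDeriv f g p).det| • (1 : ℝ) =
      ∫ p in hsq, (2 * p.1) * ((deriv f p.2 * g p.2 - f p.2 * deriv g p.2) / 2) := by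
    apply setIntegral_congr_fun hm
    rintro ⟨t, ρ⟩ ⟨ht, hρ⟩
    have := hpos ρ hρ
    have ht' : 0 < t := ht.1
    simp only [det_coneDeriv, smul_eq_mul, mul_one]
    rw [abs_of_nonpos]
    · ring
    · nlinarith
  rw [h2, hsq, Measure.volume_eq_prod,
    setIntegral_prod_mul (fun t : ℝ => 2 * t)
      (fun ρ => (deriv f ρ * g ρ - f ρ * deriv g ρ) / 2),
    ← intervalIntegral.integral_of_le zero_le_one, ← intervalIntegral.integral_of_le zero_le_one]
  rw [intervalIntegral.integral_const_mul, integral_id]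
  norm_num



/-- Lattice point count underlying Lemma 5.2: the number of integer pairs `(k,m)` with
`k ≥ 1`, `m ≥ k/V` and `γ_{k,m} ≤ r` equals `(r²/4)·∫₀¹ Δ` up to an error of order `r`. -/
theorem lattice_count_gamma_le_r_half_plane
    (ε : ℝ) (hε0 : 0 < ε) (hε1 : ε < 1 / 100)
    (f g : ℝ → ℝ) (hf : ContDiff ℝ (⊤ : ℕ∞) f) (hg : ContDiff ℝ (⊤ : ℕ∞) g)
    (hfg0 : ∀ ρ ∈ Set.Icc (0 : ℝ) (10 * ε), f ρ = ρ ^ 2 ∧ g ρ = 2 - ρ ^ 2)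
    (hfg2 : ∀ ρ ∈ Set.Icc (2 - 10 * ε) (2 : ℝ), f ρ = (2 - ρ) ^ 2 ∧ g ρ = -2 + (2 - ρ) ^ 2)
    (hfpos : ∀ ρ ∈ Set.Ioo (0 : ℝ) 2, 0 < f ρ)
    (hΔpos : ∀ ρ ∈ Set.Ioo (0 : ℝ) 2, 0 < (deriv f ρ * g ρ - f ρ * deriv g ρ) / 2)
    (V : ℝ) (hV : 1 < V)
    (hfgV : ∀ ρ ∈ Set.Icc (1 - 5 * ε) (1 : ℝ), f ρ = V ∧ g ρ = 2 - ρ)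
    (rkm : ℤ → ℤ → ℝ)
    (hrkm : ∀ k m : ℤ, 1 ≤ k →
      rkm k m ∈ Set.Ioo (0 : ℝ) 2 ∧ (k : ℝ) * g (rkm k m) = (m : ℝ) * f (rkm k m)) :
    ∃ c : ℝ, 0 < c ∧ ∀ r : ℝ, c ≤ r →
      {p : ℤ × ℤ | 1 ≤ p.1 ∧ (p.1 : ℝ) / V ≤ (p.2 : ℝ) ∧
          2 * (p.1 : ℝ) / f (rkm p.1 p.2) ≤ r}.Finite ∧
      |({p : ℤ × ℤ | 1 ≤ p.1 ∧ (p.1 : ℝ) / V ≤ (p.2 : ℝ) ∧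
            2 * (p.1 : ℝ) / f (rkm p.1 p.2) ≤ r}.ncard : ℝ) -
          r ^ 2 / 4 * ∫ ρ in (0 : ℝ)..1, (deriv f ρ * g ρ - f ρ * deriv g ρ) / 2|
        ≤ c * r := by
  have hf1 : ContDiff ℝ 1 f := hf.of_le (by exact_mod_cast le_top)
  have hg1 : ContDiff ℝ 1 g := hg.of_le (by exact_mod_cast le_top)
  have hfd := hf1.differentiable one_ne_zero
  have hgd := hg1.differentiable one_ne_zero
  have hsub : ∀ ρ ∈ Set.Ioc (0 : ℝ) 1, ρ ∈ Set.Ioo (0 : ℝ) 2 := fun ρ h => ⟨h.1, by linarith [h.2]⟩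
  have hanti : StrictAntiOn (fun ρ => g ρ / f ρ) (Set.Ioo (0 : ℝ) 2) := by
    apply strictAntiOn_of_deriv_neg (convex_Ioo _ _)
    · exact hg1.continuous.continuousOn.div hf1.continuous.continuousOn fun x hx => (hfpos x hx).ne'
    · intro x hx
      rw [interior_Ioo] at hx
      have h0 := hfpos x hx
      have h1 := hΔpos x hx
      rw [((hgd x).hasDerivAt.fun_div (hfd x).hasDerivAt h0.ne').deriv]
      apply div_neg_of_neg_of_pos _ (by positivity)
      linarith
  have hdet : ∀ p ∈ hsq, (coneDeriv f g p).det ≠ 0 := by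
    rintro ⟨t, ρ⟩ ⟨ht, hρ⟩
    rw [det_coneDeriv]
    have := hΔpos ρ (hsub ρ hρ)
    exact mul_ne_zero ht.1.ne' (by simp only; linarith)
  have hinj : Set.InjOn (coneMap f g) hsq := by
    rintro ⟨t, ρ⟩ ⟨ht, hρ⟩ ⟨t', ρ'⟩ ⟨ht', hρ'⟩ h
    simp only [coneMap, Prod.mk.injEq] at h ht ht' hρ hρ'
    have a := hfpos ρ (hsub ρ hρ)
    have a' := hfpos ρ' (hsub ρ' hρ')
    have e : ρ = ρ' := by
      apply hanti.injOn (hsub ρ hρ) (hsub ρ' hρ')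
      have b : g ρ / f ρ = (t * g ρ) / (t * f ρ) := (mul_div_mul_left _ _ ht.1.ne').symm
      have b' : g ρ' / f ρ' = (t' * g ρ') / (t' * f ρ') := (mul_div_mul_left _ _ ht'.1.ne').symm
      simp only
      rw [b, b', h.1, h.2]
    subst e
    rw [Prod.mk.injEq]
    exact ⟨mul_right_cancel₀ a.ne' h.1, rfl⟩
  have hvol := cone_volume f g hf1 hg1 (fun ρ h => hΔpos ρ (hsub ρ h)) hinj
  have hbd : Bornology.IsBounded (coneMap f g '' hsq) :=
    (cone_bounded f g hf1 hg1).isBounded.subset (Set.image_mono hsq_sub)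
  obtain ⟨C, hC, hcount⟩ := count_general _ hbd (cone_frontier f g hf1 hg1 hdet)
  have h1V : f 1 = V ∧ g 1 = 2 - 1 := hfgV 1 ⟨by linarith, le_rfl⟩
  have hV0 : 0 < V := by linarith
  refine ⟨C + 2, by linarith, fun r hr => ?_⟩
  have hr0 : 0 < r := by linarith
  have hset : {p : ℤ × ℤ | 1 ≤ p.1 ∧ (p.1 : ℝ) / V ≤ (p.2 : ℝ) ∧
          2 * (p.1 : ℝ) / f (rkm p.1 p.2) ≤ r} = latPts ((r / 2) • (coneMap f g '' hsq)) := by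
    ext ⟨k, m⟩
    simp only [Set.mem_ofPred_eq, latPts]
    constructor
    · rintro ⟨hk, hm, hγ⟩
      obtain ⟨hρ, hkm⟩ := hrkm k m hk
      have hk0 : (0 : ℝ) < k := by exact_mod_cast hk
      have a := hfpos _ hρ
      have hρ1 : rkm k m ≤ 1 := by
        rw [← hanti.le_iff_ge (show (1 : ℝ) ∈ Set.Ioo (0 : ℝ) 2 by constructor <;> norm_num) hρ]
        simp only [h1V.1, h1V.2]
        rw [div_le_iff₀ hV0] at hm
        rw [div_le_div_iff₀ hV0 a]
        have : (k : ℝ) * f (rkm k m) ≤ k * (g (rkm k m) * V) := by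
          calc (k : ℝ) * f (rkm k m) ≤ (m * V) * f (rkm k m) := by gcongr
            _ = k * (g (rkm k m) * V) := by rw [← mul_assoc, hkm]; ring
        have := le_of_mul_le_mul_left this hk0
        linarith
      rw [div_le_iff₀ a] at hγ
      refine ⟨_, ⟨(2 * k / f (rkm k m) / r, rkm k m), ⟨⟨by positivity, ?_⟩, hρ.1, hρ1⟩, rfl⟩, ?_⟩
      · rw [div_le_one hr0, div_le_iff₀ a]; exact hγ
      · simp only [coneMap, Prod.smul_mk, smul_eq_mul, Prod.mk.injEq]
        constructor
        · field_simp
        · field_simp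
          linarith
    · rintro ⟨_, ⟨⟨t, ρ⟩, ⟨ht, hρ⟩, rfl⟩, h⟩
      simp only [coneMap, Prod.smul_mk, smul_eq_mul, Prod.mk.injEq] at h ht hρ
      obtain ⟨h1, h2⟩ := h
      have a := hfpos _ (hsub ρ hρ)
      have ht0 := ht.1
      have hk0 : (0 : ℝ) < k := by rw [← h1]; positivity
      have hk : 1 ≤ k := by
        have : 0 < k := by exact_mod_cast hk0
        omega
      obtain ⟨hρ', hkm⟩ := hrkm k m hk
      have a' := hfpos _ hρ'
      have e : rkm k m = ρ := by
        apply hanti.injOn hρ' (hsub ρ hρ)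
        simp only
        rw [div_eq_div_iff a'.ne' a.ne']
        rw [← h1, ← h2] at hkm
        have : (r / 2 * t) * (g (rkm k m) * f ρ) = (r / 2 * t) * (g ρ * f (rkm k m)) := by
          linarith
        exact mul_left_cancel₀ (by positivity) this
      refine ⟨hk, ?_, ?_⟩
      · have := (hanti.le_iff_ge (show (1 : ℝ) ∈ Set.Ioo (0 : ℝ) 2 by constructor <;> norm_num)
          (hsub ρ hρ)).2 hρ.2
        simp only [h1V.1, h1V.2] at this
        rw [div_le_div_iff₀ hV0 a] at this
        rw [div_le_iff₀ hV0, ← h1, ← h2]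
        have h3 : (r / 2 * t) * ((2 - 1) * f ρ) ≤ (r / 2 * t) * (g ρ * V) := by gcongr
        linarith
      · rw [e, div_le_iff₀ a, ← h1]
        have : r * f ρ * t ≤ r * f ρ * 1 := by gcongr; exact ht.2
        linarith
  rw [hset]
  refine ⟨latPts_finite (hbd.smul₀ _), ?_⟩
  have := hcount (r / 2) (by linarith)
  rw [hvol] at this
  have e : r ^ 2 / 4 = (r / 2) ^ 2 := by ring
  rw [e]
  refine this.trans ?_
  nlinarith
end

section
/- There exists a constant c > 0 with the following significance: for all integers k ≥ 1 and m with |m| ≤ (1/(32ε²) − 1)·k, one has ρ_{k,m} ∈ [8ε, 2 − 8ε], and moreover |k·g(ρ) − m·f(ρ)| ≥ k/c for every ρ ∈ [0,2] with |ρ − ρ_{k,m}| ≥ ε, while |k·g(ρ) − m·f(ρ)| ≥ (k/c)·|ρ − ρ_{k,m}| for every ρ ∈ [0,2] with |ρ − ρ_{k,m}| < ε. -/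
lemma quotient_slope (ε : ℝ) (hε0 : 0 < ε) (hε1 : ε < 1 / 100)
    (f g : ℝ → ℝ) (hf : ContDiff ℝ (⊤ : ℕ∞) f) (hg : ContDiff ℝ (⊤ : ℕ∞) g)
    (hfpos : ∀ ρ ∈ Set.Ioo (0 : ℝ) 2, 0 < f ρ)
    (hΔpos : ∀ ρ ∈ Set.Ioo (0 : ℝ) 2, 0 < (deriv f ρ * g ρ - f ρ * deriv g ρ) / 2) :
    ∃ a : ℝ, 0 < a ∧ ∀ x ∈ Set.Icc ε (2 - ε), ∀ y ∈ Set.Icc ε (2 - ε), x < y →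
      a * (y - x) ≤ g x / f x - g y / f y := by
  have hsub : ∀ x ∈ Set.Icc ε (2 - ε), x ∈ Set.Ioo (0 : ℝ) 2 := by
    intro x hx
    exact ⟨by linarith [hx.1], by linarith [hx.2]⟩
  have hdf : Continuous (deriv f) := hf.continuous_deriv (by exact_mod_cast le_top)
  have hdg : Continuous (deriv g) := hg.continuous_deriv (by exact_mod_cast le_top)
  have hDf : Differentiable ℝ f := hf.differentiable (by simp)
  have hDg : Differentiable ℝ g := hg.differentiable (by simp)
  have hc : ContinuousOn (fun x => (deriv g x * f x - g x * deriv f x) / f x ^ 2)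
      (Set.Icc ε (2 - ε)) := by
    apply ContinuousOn.div
    · exact ((hdg.mul hf.continuous).sub (hg.continuous.mul hdf)).continuousOn
    · exact (hf.continuous.pow 2).continuousOn
    · intro x hx
      exact (pow_pos (hfpos x (hsub x hx)) 2).ne'
  obtain ⟨x0, hx0, hmax⟩ := isCompact_Icc.exists_isMaxOn ⟨ε, le_refl _, by linarith⟩ hc
  refine ⟨-((deriv g x0 * f x0 - g x0 * deriv f x0) / f x0 ^ 2), ?_, ?_⟩
  · rw [← neg_div]
    apply div_pos
    · linarith [hΔpos x0 (hsub x0 hx0)]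
    · exact pow_pos (hfpos x0 (hsub x0 hx0)) 2
  · intro x hx y hy hxy
    have hder : ∀ z ∈ Set.Icc x y, HasDerivAt (fun t => g t / f t)
        ((deriv g z * f z - g z * deriv f z) / f z ^ 2) z := by
      intro z hz
      exact (hDg z).hasDerivAt.fun_div (hDf z).hasDerivAt
        (hfpos z (hsub z ⟨hx.1.trans hz.1, hz.2.trans hy.2⟩)).ne'
    obtain ⟨z, hz, hzz⟩ := exists_hasDerivAt_eq_slope (fun t => g t / f t) _ hxy
      (fun z hz => (hder z hz).continuousAt.continuousWithinAt)
      (fun z hz => hder z ⟨hz.1.le, hz.2.le⟩)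
    have h1 := hmax (show z ∈ Set.Icc ε (2 - ε) from
      ⟨hx.1.trans hz.1.le, hz.2.le.trans hy.2⟩)
    simp only [Set.mem_ofPred_eq] at h1
    rw [hzz, div_le_iff₀ (by linarith)] at h1
    linarith

/-- Estimate (5.12) in the paper: for `|m| ≤ (1/(32ε²) − 1)k`, the point `ρ_{k,m}` lies in
`[8ε, 2−8ε]` and `|k g − m f|` is bounded below linearly in `k`, respectively in
`k·|ρ − ρ_{k,m}|` near `ρ_{k,m}`. -/
theorem kg_sub_mf_lower_bound
    (ε : ℝ) (hε0 : 0 < ε) (hε1 : ε < 1 / 100)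
    (f g : ℝ → ℝ) (hf : ContDiff ℝ (⊤ : ℕ∞) f) (hg : ContDiff ℝ (⊤ : ℕ∞) g)
    (hfg0 : ∀ ρ ∈ Set.Icc (0 : ℝ) (10 * ε), f ρ = ρ ^ 2 ∧ g ρ = 2 - ρ ^ 2)
    (hfg2 : ∀ ρ ∈ Set.Icc (2 - 10 * ε) (2 : ℝ), f ρ = (2 - ρ) ^ 2 ∧ g ρ = -2 + (2 - ρ) ^ 2)
    (hfpos : ∀ ρ ∈ Set.Ioo (0 : ℝ) 2, 0 < f ρ)
    (hΔpos : ∀ ρ ∈ Set.Ioo (0 : ℝ) 2, 0 < (deriv f ρ * g ρ - f ρ * deriv g ρ) / 2)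
    (rkm : ℤ → ℤ → ℝ)
    (hrkm : ∀ k m : ℤ, 1 ≤ k →
      rkm k m ∈ Set.Ioo (0 : ℝ) 2 ∧ (k : ℝ) * g (rkm k m) = (m : ℝ) * f (rkm k m)) :
    ∃ c : ℝ, 0 < c ∧ ∀ k m : ℤ, 1 ≤ k → |(m : ℝ)| ≤ (1 / (32 * ε ^ 2) - 1) * (k : ℝ) →
      rkm k m ∈ Set.Icc (8 * ε) (2 - 8 * ε) ∧
      (∀ ρ ∈ Set.Icc (0 : ℝ) 2, ε ≤ |ρ - rkm k m| →
        (k : ℝ) / c ≤ |(k : ℝ) * g ρ - (m : ℝ) * f ρ|) ∧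
      (∀ ρ ∈ Set.Icc (0 : ℝ) 2, |ρ - rkm k m| < ε →
        (k : ℝ) / c * |ρ - rkm k m| ≤ |(k : ℝ) * g ρ - (m : ℝ) * f ρ|) := by
  obtain ⟨a, ha, hslope⟩ := quotient_slope ε hε0 hε1 f g hf hg hfpos hΔpos
  have hsub : ∀ x ∈ Set.Icc ε (2 - ε), x ∈ Set.Ioo (0 : ℝ) 2 := by
    intro x hx
    exact ⟨by linarith [hx.1], by linarith [hx.2]⟩
  obtain ⟨x0, hx0, hmin⟩ := isCompact_Icc.exists_isMinOn
    (⟨ε, le_refl _, by linarith⟩ : (Set.Icc ε (2 - ε)).Nonempty) hf.continuous.continuousOn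
  have hb : 0 < f x0 := hfpos x0 (hsub x0 hx0)
  have hmin2 : ∀ x ∈ Set.Icc ε (2 - ε), f x0 ≤ f x := fun x hx => hmin hx
  generalize f x0 = b at hb hmin2
  have hδ : 0 < min (a * b * ε) 1 := lt_min (by positivity) one_pos
  have hδ1 : min (a * b * ε) 1 ≤ a * b * ε := min_le_left _ _
  have hδ2 : min (a * b * ε) 1 ≤ 1 := min_le_right _ _
  generalize min (a * b * ε) 1 = δ at hδ hδ1 hδ2
  refine ⟨1 / δ, by positivity, ?_⟩
  intro k m hk hm
  have hE : 1 / (32 * ε ^ 2) * ε ^ 2 = 1 / 32 := by field_simp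
  have hE0 : 0 < 1 / (32 * ε ^ 2) := by positivity
  generalize 1 / (32 * ε ^ 2) = E at hm hE hE0
  have hk' : (1 : ℝ) ≤ k := by exact_mod_cast hk
  obtain ⟨⟨hr0, hr2⟩, hr⟩ := hrkm k m hk
  generalize rkm k m = r at hr0 hr2 hr
  generalize (k : ℝ) = K at hm hk' hr
  generalize (m : ℝ) = M at hm hr
  obtain ⟨hm1, hm2⟩ := abs_le.1 hm
  have hK0 : 0 < K := by linarith
  -- basic estimate near the ends
  have hend : ∀ s : ℝ, E * K * s ^ 2 < 2 * K → 0 < 2 * K - (K + M) * s ^ 2 ∧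
      0 < 2 * K - (K - M) * s ^ 2 := by
    intro s hs
    have h1 := mul_nonneg (show 0 ≤ E * K - (K + M) by linarith) (sq_nonneg s)
    have h2 := mul_nonneg (show 0 ≤ E * K - (K - M) by linarith) (sq_nonneg s)
    constructor <;> linarith
  have hsmall : ∀ s : ℝ, 0 ≤ s → s < 8 * ε → E * K * s ^ 2 < 2 * K := by
    intro s hs0 hs
    have h1 : s ^ 2 < 64 * ε ^ 2 := by nlinarith
    have h2 := mul_lt_mul_of_pos_left h1 (mul_pos hE0 hK0)
    have h3 : E * K * (64 * ε ^ 2) = 64 * K * (E * ε ^ 2) := by ring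
    rw [h3, hE] at h2
    linarith
  have hvsmall : ∀ s : ℝ, 0 ≤ s → s ≤ ε → E * K * s ^ 2 ≤ K := by
    intro s hs0 hs
    have h1 : s ^ 2 ≤ ε ^ 2 := by nlinarith
    have h2 := mul_le_mul_of_nonneg_left h1 (mul_pos hE0 hK0).le
    have h3 : E * K * ε ^ 2 = K * (E * ε ^ 2) := by ring
    rw [h3, hE] at h2
    linarith
  have hrI : r ∈ Set.Icc (8 * ε) (2 - 8 * ε) := by
    constructor
    · by_contra! h
      obtain ⟨h1, h2⟩ := hfg0 r ⟨hr0.le, by linarith⟩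
      rw [h1, h2] at hr
      have := (hend r (hsmall r hr0.le h)).1
      linarith
    · by_contra! h
      obtain ⟨h1, h2⟩ := hfg2 r ⟨by linarith, hr2.le⟩
      rw [h1, h2] at hr
      have := (hend (2 - r) (hsmall (2 - r) (by linarith) (by linarith))).2
      linarith
  have hfr : 0 < f r := hfpos r ⟨hr0, hr2⟩
  have hrK : r ∈ Set.Icc ε (2 - ε) := ⟨by linarith [hrI.1], by linarith [hrI.2]⟩
  -- the two ranges
  have hkey : ∀ ρ ∈ Set.Icc (0 : ℝ) 2, K ≤ |K * g ρ - M * f ρ| ∨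
      K * (a * b) * |ρ - r| ≤ |K * g ρ - M * f ρ| := by
    intro ρ hρ
    rcases lt_or_ge ρ ε with h | h
    · left
      obtain ⟨h1, h2⟩ := hfg0 ρ ⟨hρ.1, by linarith⟩
      have h3 := hvsmall ρ hρ.1 h.le
      have h4 := mul_nonneg (show 0 ≤ E * K - (K + M) by linarith) (sq_nonneg ρ)
      rw [h1, h2]
      exact le_trans (by linarith) (le_abs_self _)
    rcases lt_or_ge (2 - ε) ρ with h' | h'
    · left
      obtain ⟨h1, h2⟩ := hfg2 ρ ⟨by linarith, hρ.2⟩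
      have h3 := hvsmall (2 - ρ) (by linarith [hρ.2]) (by linarith)
      have h4 := mul_nonneg (show 0 ≤ E * K - (K - M) by linarith) (sq_nonneg (2 - ρ))
      rw [h1, h2]
      exact le_trans (by linarith) (neg_le_abs _)
    right
    have hρK : ρ ∈ Set.Icc ε (2 - ε) := ⟨h, h'⟩
    have hfρ : 0 < f ρ := hfpos ρ (hsub ρ hρK)
    have hbρ : b ≤ f ρ := hmin2 ρ hρK
    have heq : K * g ρ - M * f ρ = K * f ρ * (g ρ / f ρ - g r / f r) := by
      have hM : M = K * g r / f r := by field_simp; linarith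
      rw [hM]
      field_simp
    have habs : a * |ρ - r| ≤ |g ρ / f ρ - g r / f r| := by
      rcases lt_trichotomy ρ r with hlt | rfl | hlt
      · rw [abs_of_neg (by linarith : ρ - r < 0)]
        exact le_trans (by linarith [hslope ρ hρK r hrK hlt]) (le_abs_self _)
      · simp
      · rw [abs_of_pos (by linarith : 0 < ρ - r)]
        exact le_trans (by linarith [hslope r hrK ρ hρK hlt]) (neg_le_abs _)
    rw [heq, abs_mul, abs_of_pos (mul_pos hK0 hfρ)]
    calc K * (a * b) * |ρ - r| = K * b * (a * |ρ - r|) := by ring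
      _ ≤ K * f ρ * |g ρ / f ρ - g r / f r| := by gcongr
  have hKc : K / (1 / δ) = K * δ := by field_simp
  rw [hKc]
  refine ⟨hrI, ?_, ?_⟩
  · intro ρ hρ hd
    rcases hkey ρ hρ with h | h
    · exact le_trans (by nlinarith) h
    · refine le_trans ?_ h
      calc K * δ ≤ K * (a * b * ε) := by gcongr
        _ = K * (a * b) * ε := by ring
        _ ≤ K * (a * b) * |ρ - r| := by gcongr
  · intro ρ hρ hd
    have h0 := abs_nonneg (ρ - r)
    rcases hkey ρ hρ with h | h
    · refine le_trans ?_ h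
      calc K * δ * |ρ - r| ≤ K * 1 * 1 := by gcongr; linarith
        _ = K := by ring
    · refine le_trans ?_ h
      have : δ ≤ a * b := hδ1.trans (by nlinarith [mul_pos ha hb])
      gcongr
end

section
/- Let E be a finite-dimensional complex inner product space, T : E → E a self-adjoint linear map, and δ > 0. Suppose ψ_1, …, ψ_L is an orthonormal family in E and μ_1, …, μ_L are real numbers such that: (i) ‖Tψ_l − μ_l ψ_l‖² ≤ δ for every l; (ii) ⟨Tψ_l, ψ_{l'}⟩ = 0 for all l ≠ l'; (iii) Σ_{l ≠ l'} |⟨Tψ_l, Tψ_{l'}⟩| ≤ δ. Then for every real number ν and all complex numbers c_1, …, c_L with Σ_l |c_l|² = 1, one has ‖(T − ν)(Σ_l c_l ψ_l)‖ ≤ √(2δ) + max_l |ν − μ_l|. -/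
open scoped InnerProductSpace

/-- The key estimate in the proof of Lemma 5.4: the operator `T - ν` applied to a unit
combination of the almost eigensections is controlled by `√(2δ) + max_l |ν - μ_l|`. -/
theorem operator_minus_nu_on_combination_of_almost_eigensections
    {E : Type*} [NormedAddCommGroup E] [InnerProductSpace ℂ E] [FiniteDimensional ℂ E]
    (T : E →ₗ[ℂ] E) (hT : T.IsSymmetric)
    (δ : ℝ) (hδ : 0 < δ) (L : ℕ) (ψ : Fin L → E) (hψ : Orthonormal ℂ ψ)
    (μ : Fin L → ℝ)
    (h1 : ∀ l, ‖T (ψ l) - (μ l : ℂ) • ψ l‖ ^ 2 ≤ δ)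
    (h2 : ∀ l l', l ≠ l' → ⟪T (ψ l), ψ l'⟫_ℂ = 0)
    (h3 : ∑ p ∈ Finset.univ.offDiag, ‖⟪T (ψ p.1), T (ψ p.2)⟫_ℂ‖ ≤ δ) :
    ∀ (ν : ℝ) (c : Fin L → ℂ), (∑ l, ‖c l‖ ^ 2) = 1 →
      ‖T (∑ l, c l • ψ l) - (ν : ℂ) • ∑ l, c l • ψ l‖
        ≤ Real.sqrt (2 * δ) + ⨆ l, |ν - μ l| := by
  intro ν c hc
  have hc1 : ∀ l, ‖c l‖ ≤ 1 := by
    intro l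
    have h : ‖c l‖ ^ 2 ≤ ∑ l, ‖c l‖ ^ 2 :=
      Finset.single_le_sum (f := fun l => ‖c l‖ ^ 2) (fun i _ => by positivity)
        (Finset.mem_univ l)
    rw [hc] at h
    nlinarith [norm_nonneg (c l)]
  have hsplit : T (∑ l, c l • ψ l) - (ν : ℂ) • ∑ l, c l • ψ l
      = (∑ l, c l • (T (ψ l) - (μ l : ℂ) • ψ l))
        + ∑ l, (c l * ((μ l : ℂ) - (ν : ℂ))) • ψ l := by
    rw [map_sum, Finset.smul_sum, ← Finset.sum_sub_distrib, ← Finset.sum_add_distrib]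
    refine Finset.sum_congr rfl fun l _ => ?_
    rw [map_smul]
    module
  have hoff : ∀ i j, i ≠ j →
      ⟪T (ψ i) - (μ i : ℂ) • ψ i, T (ψ j) - (μ j : ℂ) • ψ j⟫_ℂ = ⟪T (ψ i), T (ψ j)⟫_ℂ := by
    intro i j hij
    have e1 := h2 i j hij
    have e2 : ⟪ψ i, T (ψ j)⟫_ℂ = 0 := by rw [← hT]; exact e1
    have e3 : ⟪ψ i, ψ j⟫_ℂ = 0 := hψ.2 hij
    simp [inner_sub_left, inner_sub_right, inner_smul_left, inner_smul_right, e1, e2, e3]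
  have hA : ‖∑ l, c l • (T (ψ l) - (μ l : ℂ) • ψ l)‖ ≤ Real.sqrt (2 * δ) := by
    apply Real.le_sqrt_of_sq_le
    set φ : Fin L → E := fun l => T (ψ l) - (μ l : ℂ) • ψ l with hφ
    have b1 : ‖∑ l, c l • φ l‖ ^ 2
        ≤ ∑ i, ∑ j, ‖⟪c i • φ i, c j • φ j⟫_ℂ‖ := by
      have e : ‖∑ l, c l • φ l‖ ^ 2 = ‖⟪∑ l, c l • φ l, ∑ l, c l • φ l⟫_ℂ‖ := by
        rw [inner_self_eq_norm_sq_to_K]; simp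
      rw [e, sum_inner]
      refine (norm_sum_le _ _).trans (Finset.sum_le_sum fun i _ => ?_)
      rw [inner_sum]
      exact norm_sum_le _ _
    have b2 : ∑ i, ∑ j, ‖⟪c i • φ i, c j • φ j⟫_ℂ‖
        = ∑ i, ‖⟪c i • φ i, c i • φ i⟫_ℂ‖
          + ∑ p ∈ Finset.univ.offDiag, ‖⟪c p.1 • φ p.1, c p.2 • φ p.2⟫_ℂ‖ := by
      rw [← Finset.sum_product', ← Finset.diag_union_offDiag,
        Finset.sum_union (Finset.disjoint_diag_offDiag _), Finset.sum_diag]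
    have b3 : ∑ i, ‖⟪c i • φ i, c i • φ i⟫_ℂ‖ ≤ δ := by
      calc _ ≤ ∑ i, ‖c i‖ ^ 2 * δ := by
            refine Finset.sum_le_sum fun i _ => ?_
            have e : ‖⟪c i • φ i, c i • φ i⟫_ℂ‖ = ‖c i‖ ^ 2 * ‖φ i‖ ^ 2 := by
              rw [inner_self_eq_norm_sq_to_K, norm_smul]; simp [mul_pow]
            rw [e]
            exact mul_le_mul_of_nonneg_left (h1 i) (by positivity)
        _ = δ := by rw [← Finset.sum_mul, hc, one_mul]
    have b4 : ∑ p ∈ Finset.univ.offDiag, ‖⟪c p.1 • φ p.1, c p.2 • φ p.2⟫_ℂ‖ ≤ δ := by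
      refine le_trans (Finset.sum_le_sum fun p hp => ?_) h3
      have hne : p.1 ≠ p.2 := (Finset.mem_offDiag.1 hp).2.2
      rw [inner_smul_left, inner_smul_right, hφ]
      simp only [hoff _ _ hne, norm_mul, RCLike.norm_conj]
      have := mul_le_one₀ (hc1 p.1) (norm_nonneg _) (hc1 p.2)
      rw [← mul_assoc]
      exact mul_le_of_le_one_left (norm_nonneg _) this
    linarith
  have hM : ∀ l, |ν - μ l| ≤ ⨆ l, |ν - μ l| := fun l =>
    le_ciSup (f := fun l => |ν - μ l|) (Set.finite_range _).bddAbove l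
  have hM0 : 0 ≤ ⨆ l, |ν - μ l| := Real.iSup_nonneg fun l => abs_nonneg _
  have hB : ‖∑ l, (c l * ((μ l : ℂ) - (ν : ℂ))) • ψ l‖ ≤ ⨆ l, |ν - μ l| := by
    refine (sq_le_sq₀ (norm_nonneg _) hM0).1 ?_
    have e : ‖∑ l, (c l * ((μ l : ℂ) - (ν : ℂ))) • ψ l‖ ^ 2
        = ∑ l, ‖c l * ((μ l : ℂ) - (ν : ℂ))‖ ^ 2 := by
      have h := hψ.inner_sum (fun l => c l * ((μ l : ℂ) - (ν : ℂ)))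
        (fun l => c l * ((μ l : ℂ) - (ν : ℂ))) Finset.univ
      rw [inner_self_eq_norm_sq_to_K] at h
      simp only [RCLike.conj_mul] at h
      exact_mod_cast h
    rw [e]
    calc _ ≤ ∑ l, ‖c l‖ ^ 2 * (⨆ l, |ν - μ l|) ^ 2 := by
          refine Finset.sum_le_sum fun l _ => ?_
          have e2 : ‖(μ l : ℂ) - (ν : ℂ)‖ = |ν - μ l| := by
            rw [← Complex.ofReal_sub, Complex.norm_real, Real.norm_eq_abs, abs_sub_comm]
          rw [norm_mul, mul_pow, e2]
          gcongr
          exact hM l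
      _ = _ := by rw [← Finset.sum_mul, hc, one_mul]
  rw [hsplit]
  exact (norm_add_le _ _).trans (add_le_add hA hB)
end

section
/- Let E be a complex inner product space of finite dimension L₀, and let u_1, …, u_L be unit vectors in E. Then L² ≤ L₀ · (L + Σ_{l ≠ l'} |⟨u_l, u_{l'}⟩|²), where the sum runs over all ordered pairs (l, l') with 1 ≤ l, l' ≤ L and l ≠ l'. -/
open scoped InnerProductSpace

theorem gram_swap {ι κ : Type*} [Fintype ι] [Fintype κ] (a : κ → ι → ℂ) :
    ∑ i, ∑ j, ‖∑ l, a l i * (starRingEnd ℂ) (a l j)‖ ^ 2 =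
      ∑ l, ∑ m, ‖∑ i, (starRingEnd ℂ) (a l i) * a m i‖ ^ 2 := by
  have h : ∀ z : ℂ, ((‖z‖ ^ 2 : ℝ) : ℂ) = z * (starRingEnd ℂ) z := by
    intro z
    rw [Complex.mul_conj, Complex.normSq_eq_norm_sq]
  apply Complex.ofReal_injective
  simp only [Complex.ofReal_sum, h, map_sum, map_mul, Complex.conj_conj,
    Finset.sum_mul_sum]
  simp only [← Fintype.sum_prod_type']
  let e : ((ι × ι) × (κ × κ)) ≃ ((κ × κ) × (ι × ι)) :=
    { toFun := fun x => ((x.2.1, x.2.2), (x.1.2, x.1.1))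
      invFun := fun x => ((x.2.2, x.2.1), (x.1.1, x.1.2))
      left_inv := fun _ => rfl
      right_inv := fun _ => rfl }
  have key : ∑ x : (ι × ι) × (κ × κ),
      a x.2.1 x.1.1 * (starRingEnd ℂ) (a x.2.1 x.1.2) *
        ((starRingEnd ℂ) (a x.2.2 x.1.1) * a x.2.2 x.1.2) =
      ∑ x : (κ × κ) × (ι × ι),
      (starRingEnd ℂ) (a x.1.1 x.2.1) * a x.1.2 x.2.1 *
        (a x.1.1 x.2.2 * (starRingEnd ℂ) (a x.1.2 x.2.2)) := by
    refine Fintype.sum_equiv e _ _ ?_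
    intro x
    simp only [e, Equiv.coe_fn_mk]
    ring
  simp only [Fintype.sum_prod_type] at key ⊢
  exact key

/-- The Welch bound computation in Lemma 7.2: for unit vectors `u₁, …, u_L` in an
`L₀`-dimensional complex inner product space,
`L² ≤ L₀ (L + Σ_{l ≠ l'} |⟨u_l, u_{l'}⟩|²)`. -/
theorem welch_bound
    {E : Type*} [NormedAddCommGroup E] [InnerProductSpace ℂ E] [FiniteDimensional ℂ E]
    (L₀ L : ℕ) (hdim : Module.finrank ℂ E = L₀)
    (u : Fin L → E) (hu : ∀ l, ‖u l‖ = 1) :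
    (L : ℝ) ^ 2 ≤ (L₀ : ℝ) *
      ((L : ℝ) + ∑ p ∈ Finset.univ.offDiag, ‖⟪u p.1, u p.2⟫_ℂ‖ ^ 2) := by
  classical
  let b := stdOrthonormalBasis ℂ E
  let a : Fin L → Fin (Module.finrank ℂ E) → ℂ := fun l i => ⟪b i, u l⟫_ℂ
  have hin : ∀ l m, ∑ i, (starRingEnd ℂ) (a l i) * a m i = ⟪u l, u m⟫_ℂ := by
    intro l m
    rw [← b.sum_inner_mul_inner (u l) (u m)]
    simp [a]
  have hR : (L : ℝ) + ∑ p ∈ Finset.univ.offDiag, ‖⟪u p.1, u p.2⟫_ℂ‖ ^ 2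
      = ∑ l, ∑ m, ‖⟪u l, u m⟫_ℂ‖ ^ 2 := by
    rw [← Fintype.sum_prod_type' (f := fun l m => ‖⟪u l, u m⟫_ℂ‖ ^ 2),
      ← Finset.univ_product_univ, ← Finset.diag_union_offDiag,
      Finset.sum_union (Finset.disjoint_diag_offDiag _), Finset.sum_diag]
    simp [inner_self_eq_norm_sq_to_K, hu]
  have hsw := gram_swap a
  simp only [hin] at hsw
  rw [hR, ← hsw, ← hdim]
  have htr : ∑ i, ∑ l, ‖a l i‖ ^ 2 = (L : ℝ) := by
    rw [Finset.sum_comm]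
    simp [a, b.sum_sq_norm_inner_right, hu]
  have hcs := sq_sum_le_card_mul_sum_sq (s := Finset.univ) (f := fun i => ∑ l, ‖a l i‖ ^ 2)
  rw [htr, Finset.card_univ, Fintype.card_fin] at hcs
  refine hcs.trans ?_
  gcongr with i
  have hd : (∑ l, ‖a l i‖ ^ 2) ^ 2 = ‖∑ l, a l i * (starRingEnd ℂ) (a l i)‖ ^ 2 := by
    have : ∑ l, a l i * (starRingEnd ℂ) (a l i) = ((∑ l, ‖a l i‖ ^ 2 : ℝ) : ℂ) := by
      simp [Complex.mul_conj, Complex.normSq_eq_norm_sq]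
    rw [this, Complex.norm_real, Real.norm_eq_abs, sq_abs]
  rw [hd]
  exact Finset.single_le_sum
    (f := fun j => ‖∑ l, a l i * (starRingEnd ℂ) (a l j)‖ ^ 2)
    (fun j _ => by positivity) (Finset.mem_univ i)
end

section
/- Fix a constant ε ∈ (0, 1/100). There exists a constant c > 2 such that for every real number γ > 0 and every real number t ≥ 9ε, one has (1/Γ(32ε²γ + 1)) · (γ/2)^{32ε²γ + 1} · t^{64ε²γ} · exp(−(1/2 − 1/c)·γt²) ≤ c. -/
open MeasureTheory in
lemma gamma_lower_aux (a : ℝ) (ha : 0 < a) :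
    a ^ a * Real.exp (-(a + 1)) ≤ Real.Gamma (a + 1) := by
  have hint := Real.GammaIntegral_convergent (s := a + 1) (by linarith)
  rw [Real.Gamma_eq_integral (by linarith)]
  have hsub : Set.Ioc a (a + 1) ⊆ Set.Ioi (0 : ℝ) := fun y hy => lt_trans ha hy.1
  have h1 : ∫ y in Set.Ioc a (a + 1), a ^ a * Real.exp (-(a + 1))
      = a ^ a * Real.exp (-(a + 1)) := by
    simp
  rw [← h1]
  calc _ ≤ ∫ y in Set.Ioc a (a + 1), Real.exp (-y) * y ^ (a + 1 - 1) := by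
        apply setIntegral_mono_on
        · exact integrableOn_const (by simp)
        · exact hint.mono_set hsub
        · exact measurableSet_Ioc
        · intro y hy
          have e : a + 1 - 1 = a := by ring
          rw [e, mul_comm]
          have h2 : a ^ a ≤ y ^ a := Real.rpow_le_rpow ha.le hy.1.le ha.le
          have h3 : Real.exp (-(a + 1)) ≤ Real.exp (-y) :=
            Real.exp_le_exp.2 (by linarith [hy.2])
          have := Real.rpow_nonneg ha.le a
          gcongr
    _ ≤ _ := by
        apply setIntegral_mono_set hint
        · filter_upwards [ae_restrict_mem measurableSet_Ioi] with y hy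
          have hy' : (0 : ℝ) < y := hy
          have := Real.rpow_nonneg hy'.le (a + 1 - 1)
          simp only [Pi.zero_apply]
          positivity
        · exact hsub.eventuallyLE

lemma rpow_upper_aux (a x : ℝ) (ha : 0 < a) (hx : 0 < x) :
    x ^ a ≤ a ^ a * Real.exp (64 / 81 * x - 76 / 100 * a) := by
  have h1 : x / a ≤ Real.exp (64 / 81 * (x / a) - 76 / 100) := by
    have h2 := Real.add_one_le_exp (64 / 81 * (x / a) - 1)
    have h3 := Real.quadratic_le_exp_of_nonneg (x := 12 / 100) (by norm_num)
    have h4 : (81 / 64 : ℝ) ≤ Real.exp (24 / 100) := by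
      have : Real.exp (24 / 100) = Real.exp (12 / 100) * Real.exp (12 / 100) := by
        rw [← Real.exp_add]; norm_num
      rw [this]; nlinarith
    have h5 : Real.exp (64 / 81 * (x / a) - 76 / 100)
        = Real.exp (24 / 100) * Real.exp (64 / 81 * (x / a) - 1) := by
      rw [← Real.exp_add]; congr 1; ring
    rw [h5]
    have h6 : 0 < x / a := by positivity
    calc x / a = 81 / 64 * (64 / 81 * (x / a) - 1 + 1) := by ring
      _ ≤ _ := by gcongr; linarith
  have h7 : x = a * (x / a) := by field_simp
  have h8 : x ^ a = a ^ a * (x / a) ^ a := by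
    rw [← Real.mul_rpow ha.le (by positivity), ← h7]
  rw [h8]
  have h9 := Real.rpow_le_rpow (by positivity) h1 ha.le
  rw [← Real.exp_mul] at h9
  have h10 : (64 / 81 * (x / a) - 76 / 100) * a = 64 / 81 * x - 76 / 100 * a := by
    field_simp
  rw [h10] at h9
  have := Real.rpow_nonneg ha.le a
  gcongr

/-- The Stirling-type uniform bound in the proof of Lemma 5.11: the prefactor
`Γ(32ε²γ+1)⁻¹ (γ/2)^{32ε²γ+1} t^{64ε²γ} e^{-(1/2-1/c)γt²}` is uniformly bounded
for all `γ > 0` and `t ≥ 9ε`. -/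
theorem gamma_function_prefactor_uniform_bound (ε : ℝ) (hε0 : 0 < ε) (hε1 : ε < 1 / 100) :
    ∃ c : ℝ, 2 < c ∧ ∀ γ t : ℝ, 0 < γ → 9 * ε ≤ t →
      (1 / Real.Gamma (32 * ε ^ 2 * γ + 1)) * (γ / 2) ^ (32 * ε ^ 2 * γ + 1) *
          t ^ (64 * ε ^ 2 * γ) * Real.exp (-(1 / 2 - 1 / c) * γ * t ^ 2)
        ≤ c := by
  have hpos : 0 < 5 / ε ^ 2 := by positivity
  refine ⟨200 + 5 / ε ^ 2, by linarith, ?_⟩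
  intro γ t hγ ht
  set c := 200 + 5 / ε ^ 2 with hc
  have ht0 : 0 < t := by linarith
  obtain ⟨a, ha⟩ : ∃ a, a = 32 * ε ^ 2 * γ := ⟨_, rfl⟩
  obtain ⟨x, hx⟩ : ∃ x, x = γ / 2 * t ^ 2 := ⟨_, rfl⟩
  have ha0 : 0 < a := by rw [ha]; positivity
  have hx0 : 0 < x := by rw [hx]; positivity
  have hax : 81 / 64 * a ≤ x := by
    have : (9 * ε) ^ 2 ≤ t ^ 2 := by gcongr
    rw [ha, hx]
    nlinarith
  have hG := gamma_lower_aux a ha0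
  have hX := rpow_upper_aux a x ha0 hx0
  have haa : 0 < a ^ a := Real.rpow_pos_of_pos ha0 a
  have hcinv : 1 / c ≤ 1 / 200 := one_div_le_one_div_of_le (by norm_num) (by linarith)
  have e1 : (64 * ε ^ 2 * γ) = 2 * a := by rw [ha]; ring
  have e2 : (γ / 2) ^ (a + 1) * t ^ (2 * a) = γ / 2 * x ^ a := by
    rw [Real.rpow_add_one (by positivity), Real.rpow_mul ht0.le, hx,
      Real.mul_rpow (by positivity) (by positivity), Real.rpow_two]
    ring
  have e3 : -(1 / 2 - 1 / c) * γ * t ^ 2 = -x + 2 * (1 / c) * x := by rw [hx]; ring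
  rw [← ha, e1, e3, mul_assoc (1 / _), e2]
  have hGpos : 0 < Real.Gamma (a + 1) := Real.Gamma_pos_of_pos (by linarith)
  have key : γ / 2 * x ^ a * Real.exp (-x + 2 * (1 / c) * x)
      ≤ c * (a ^ a * Real.exp (-(a + 1))) := by
    have s1 : γ / 2 * Real.exp (64 / 81 * x - 76 / 100 * a) * Real.exp (-x + 2 * (1 / c) * x)
        ≤ c * Real.exp (-(a + 1)) := by
      have s2 : Real.exp (64 / 81 * x - 76 / 100 * a) * Real.exp (-x + 2 * (1 / c) * x)
          ≤ Real.exp 1 * Real.exp (-(a / 100)) * Real.exp (-(a + 1)) := by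
        rw [← Real.exp_add, ← Real.exp_add, ← Real.exp_add]
        apply Real.exp_le_exp.2
        have : 1 / c * x ≤ 1 / 200 * x := by gcongr
        nlinarith
      have s3 : γ / 2 * (Real.exp 1 * Real.exp (-(a / 100))) ≤ c := by
        have h1 := Real.exp_one_lt_d9
        have h2 : Real.exp (-(a / 100)) * (a / 100) ≤ 1 := by
          rw [Real.exp_neg, inv_mul_le_iff₀ (Real.exp_pos _)]
          linarith [Real.add_one_le_exp (a / 100)]
        have h3 : γ = 100 / (32 * ε ^ 2) * (a / 100) := by rw [ha]; field_simp
        calc γ / 2 * (Real.exp 1 * Real.exp (-(a / 100)))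
            = 100 / (64 * ε ^ 2) * Real.exp 1 * (Real.exp (-(a / 100)) * (a / 100)) := by
              rw [h3]; field_simp; ring
          _ ≤ 100 / (64 * ε ^ 2) * 3 * 1 := by
              gcongr
              linarith
          _ = (75 / 16) / ε ^ 2 := by field_simp; norm_num
          _ ≤ 5 / ε ^ 2 := by gcongr; norm_num
          _ ≤ c := by linarith
      calc _ = γ / 2 * (Real.exp (64 / 81 * x - 76 / 100 * a)
              * Real.exp (-x + 2 * (1 / c) * x)) := by ring
        _ ≤ γ / 2 * (Real.exp 1 * Real.exp (-(a / 100)) * Real.exp (-(a + 1))) := by gcongr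
        _ = γ / 2 * (Real.exp 1 * Real.exp (-(a / 100))) * Real.exp (-(a + 1)) := by ring
        _ ≤ _ := by gcongr
    calc _ ≤ γ / 2 * (a ^ a * Real.exp (64 / 81 * x - 76 / 100 * a))
            * Real.exp (-x + 2 * (1 / c) * x) := by gcongr
      _ = a ^ a * (γ / 2 * Real.exp (64 / 81 * x - 76 / 100 * a)
            * Real.exp (-x + 2 * (1 / c) * x)) := by ring
      _ ≤ a ^ a * (c * Real.exp (-(a + 1))) := by gcongr
      _ = _ := by ring
  have hc0 : 0 ≤ c := by linarith
  rw [mul_assoc, one_div_mul_eq_div, div_le_iff₀ hGpos]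
  exact key.trans (by gcongr)
end
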